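/- Let 𝒫₁ = (P₁, μ₁, σ₁) be an n₁-dimensional system and 𝒫₂ = (P₂, μ₂, σ₂) an n₂-dimensional system, and let 𝒫₁ × 𝒫₂ = (P₁ × P₂, μ₁ × μ₂, σ₁ ⊞ σ₂) be the composite system. Then for every T ≥ 0, the μ-canonical distribution of temperature T of the composite system 𝒫₁ × 𝒫₂ equals the product u₁ × u₂ : (x,y) ↦ u₁(x)·u₂(y), where u₁ and u₂ are the μ-canonical distributions of temperature T of 𝒫₁ and 𝒫₂, respectively. -/

import Mathlib

open MeasureTheory Filter Topology
open scoped ENNReal NNReal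

noncomputable section

variable {ι : Type} [Fintype ι]

/-- A polytope in `ℝ^ι`: a compact set with nonempty interior which is a finite
intersection of closed half-spaces (cut out by nonzero affine functions). -/
def IsPolytope (P : Set (ι → ℝ)) : Prop :=
  IsCompact P ∧ (interior P).Nonempty ∧
    ∃ (m : ℕ) (L : Fin m → ((ι → ℝ) →ᵃ[ℝ] ℝ)),
      (∀ k, L k ≠ 0) ∧ P = ⋂ k, {x | 0 ≤ L k x}

/-- `F` is a face of `P`. -/
def IsFaceOf (P F : Set (ι → ℝ)) : Prop :=
  ∃ ℓ : (ι → ℝ) →ᵃ[ℝ] ℝ, ℓ ≠ 0 ∧ (∀ y ∈ P, 0 ≤ ℓ y) ∧ F = {y ∈ P | ℓ y = 0}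

/-- A facet: a face spanning an affine subspace of codimension one. -/
def IsFacetOf (P F : Set (ι → ℝ)) : Prop :=
  IsFaceOf P F ∧ Module.finrank ℝ (vectorSpan ℝ F) + 1 = Fintype.card ι

/-- A simple polytope: every vertex lies on exactly `dim` facets. -/
def IsSimplePolytope (P : Set (ι → ℝ)) : Prop :=
  IsPolytope P ∧ ∀ v : ι → ℝ, IsFaceOf P {v} →
    {F : Set (ι → ℝ) | IsFacetOf P F ∧ v ∈ F}.ncard = Fintype.card ι

/-- A system `𝒫 = (P, μ, σ)` on `ℝ^ι`: a simple polytope `P`, a flat measure `μ`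
on `P` and a flat measure `σ` on `∂P`. -/
structure SystemOn (ι : Type) [Fintype ι] where
  P : Set (ι → ℝ)
  μ : Measure (ι → ℝ)
  σ : Measure (ι → ℝ)
  simple : IsSimplePolytope P
  flat : ∃ c : ℝ, 0 < c ∧ μ = ENNReal.ofReal c • volume.restrict P
  bdry_supp : σ (frontier P)ᶜ = 0
  flat_bdry : ∀ F : Set (ι → ℝ), IsFacetOf P F →
    ∃ c : ℝ, 0 < c ∧ σ.restrict F =
      ENNReal.ofReal c •
        (Measure.hausdorffMeasure ((Fintype.card ι : ℝ) - 1)).restrict F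

/-- `y log y`. -/
def xlogx (y : ℝ≥0∞) : ℝ := y.toReal * Real.log y.toReal

/-- Log-convexity on `P`. -/
def LogConvexOn (P : Set (ι → ℝ)) (u : (ι → ℝ) → ℝ≥0∞) : Prop :=
  ∀ ⦃x⦄, x ∈ P → ∀ ⦃y⦄, y ∈ P → ∀ ⦃t : ℝ⦄, 0 ≤ t → t ≤ 1 →
    u ((1 - t) • x + t • y) ≤ u x ^ (1 - t) * u y ^ t

/-- `ℳ^{exp,p}(P)`. -/
def MExp (S : SystemOn ι) (p : ℝ) : Set ((ι → ℝ) → ℝ≥0∞) :=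
  {u | LowerSemicontinuousOn u S.P ∧ (∀ x ∈ S.P, 0 < u x) ∧ LogConvexOn S.P u ∧
    (∫⁻ x in S.P, u x ∂S.μ) = S.μ S.P ∧ (∫⁻ x in S.P, u x ^ p ∂S.μ) < ⊤}

/-- The entropy `S_𝒫(u) = −(1/μ(P)) ∫_P u log u dμ`. -/
def Spf (S : SystemOn ι) (u : (ι → ℝ) → ℝ≥0∞) : EReal :=
  (((S.μ S.P).toReal⁻¹ : ℝ) : EReal) *
    (((∫⁻ x in S.P, ENNReal.ofReal (-(xlogx (u x))) ∂S.μ : ℝ≥0∞) : EReal)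
      - ((∫⁻ x in S.P, ENNReal.ofReal (xlogx (u x)) ∂S.μ : ℝ≥0∞) : EReal))

/-- The internal μ-energy `U_𝒫(u) = (1/μ(P)) ∫_{∂P} u dσ`. -/
def Upf (S : SystemOn ι) (u : (ι → ℝ) → ℝ≥0∞) : ℝ≥0∞ :=
  (S.μ S.P)⁻¹ * ∫⁻ x in frontier S.P, u x ∂S.σ

/-- The free μ-energy `F_𝒫(T,u)`. -/
def Fpf (S : SystemOn ι) (T : ℝ) (u : (ι → ℝ) → ℝ≥0∞) : EReal :=
  if Spf S u = ⊥ then ⊤ else (Upf S u : EReal) - (T : EReal) * Spf S u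

/-- `u` is the μ-canonical distribution of temperature `T ≥ 0`. -/
def IsCanonical (S : SystemOn ι) (T : ℝ) (u : (ι → ℝ) → ℝ≥0∞) : Prop :=
  u ∈ MExp S 1 ∧
  (0 < T → ∀ u' ∈ MExp S 1, Fpf S T u ≤ Fpf S T u') ∧
  (T = 0 → (∀ u' ∈ MExp S 1, Upf S u ≤ Upf S u') ∧
    ∀ u' ∈ MExp S 1, (∀ u'' ∈ MExp S 1, Upf S u' ≤ Upf S u'') → Spf S u' ≤ Spf S u)

/-- The canonical identification `ℝ^{ι₁} × ℝ^{ι₂} ≅ ℝ^{ι₁ ⊕ ι₂}`. -/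
def joinMap (ι₁ ι₂ : Type) : ((ι₁ → ℝ) × (ι₂ → ℝ)) → ((ι₁ ⊕ ι₂) → ℝ) :=
  fun p => Sum.elim p.1 p.2

section

lemma xl_lower (x : ℝ) (hx : 0 ≤ x) : x - 1 ≤ x * Real.log x := by
  rcases hx.eq_or_lt with h | h
  · subst h; simp
  · have := Real.one_sub_inv_le_log_of_pos h
    have h2 := mul_le_mul_of_nonneg_left this hx
    have : x * (1 - x⁻¹) = x - 1 := by field_simp
    linarith

lemma gibbs_pt (a b : ℝ) (ha : 0 ≤ a) (hb : 0 < b) :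
    a * Real.log b + a - b ≤ a * Real.log a := by
  rcases ha.eq_or_lt with h | h
  · subst h; simp; exact hb.le
  · have := xl_lower (a / b) (by positivity)
    rw [Real.log_div h.ne' hb.ne'] at this
    have h2 := mul_le_mul_of_nonneg_left this hb.le
    have e1 : b * (a / b - 1) = a - b := by field_simp
    have e2 : b * (a / b * (Real.log a - Real.log b)) = a * (Real.log a - Real.log b) := by
      field_simp
    rw [e1, e2] at h2
    linarith

section abstractprod
variable {X Y : Type*} [MeasurableSpace X] [MeasurableSpace Y]

lemma marg_one (ν₁ : Measure X) (ν₂ : Measure Y) [IsProbabilityMeasure ν₁]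
    [IsProbabilityMeasure ν₂] (f : X × Y → ℝ) (hf0 : ∀ z, 0 ≤ f z)
    (hf : Integrable f (ν₁.prod ν₂))
    (hfl : Integrable (fun z => f z * Real.log (f z)) (ν₁.prod ν₂)) :
    Integrable (fun x => (∫ y, f (x, y) ∂ν₂) * Real.log (∫ y, f (x, y) ∂ν₂)) ν₁ ∧
    Integrable (fun z : X × Y => f z * Real.log (∫ y, f (z.1, y) ∂ν₂)) (ν₁.prod ν₂) ∧
    ∫ z : X × Y, f z * Real.log (∫ y, f (z.1, y) ∂ν₂) ∂(ν₁.prod ν₂) =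
      ∫ x, (∫ y, f (x, y) ∂ν₂) * Real.log (∫ y, f (x, y) ∂ν₂) ∂ν₁ := by
  have hg := hf.integral_prod_left
  have hJ := hfl.integral_prod_left
  have hg0 : ∀ x, 0 ≤ ∫ y, f (x, y) ∂ν₂ := fun x => integral_nonneg fun y => hf0 _
  have hlogm : AEStronglyMeasurable (fun x => Real.log (∫ y, f (x, y) ∂ν₂)) ν₁ :=
    (Real.measurable_log.comp_aemeasurable hg.aestronglyMeasurable.aemeasurable).aestronglyMeasurable
  have hi1 : Integrable (fun x => (∫ y, f (x, y) ∂ν₂) * Real.log (∫ y, f (x, y) ∂ν₂)) ν₁ := by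
    refine Integrable.mono' (hJ.norm.add (integrable_const (1 : ℝ)))
      (hg.aestronglyMeasurable.mul hlogm) ?_
    filter_upwards [hf.prod_right_ae, hfl.prod_right_ae] with x h1 h2
    have hj := ConvexOn.map_integral_le (μ := ν₂) (f := fun y => f (x, y))
      Real.convexOn_mul_log Real.continuous_mul_log.continuousOn isClosed_Ici
      (Eventually.of_forall fun y => hf0 _) h1 h2
    have hl := xl_lower _ (hg0 x)
    have h3 := hg0 x
    simp only [Pi.add_apply, Real.norm_eq_abs] at *
    rw [abs_le]
    constructor
    · have := abs_nonneg (∫ y, f (x, y) * Real.log (f (x, y)) ∂ν₂)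
      linarith
    · have := le_abs_self (∫ y, f (x, y) * Real.log (f (x, y)) ∂ν₂)
      linarith
  have hi2 : Integrable (fun z : X × Y => f z * Real.log (∫ y, f (z.1, y) ∂ν₂))
      (ν₁.prod ν₂) := by
    have hm : AEStronglyMeasurable (fun z : X × Y => f z * Real.log (∫ y, f (z.1, y) ∂ν₂))
      (ν₁.prod ν₂) := hf.aestronglyMeasurable.mul hlogm.comp_fst
    rw [integrable_prod_iff hm]
    constructor
    · filter_upwards [hf.prod_right_ae] with x h1
      exact h1.mul_const _
    · refine hi1.norm.congr ?_
      filter_upwards with x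
      simp only [norm_mul, Real.norm_eq_abs]
      rw [integral_mul_const, abs_of_nonneg (hg0 x)]
      congr 1
      apply integral_congr_ae
      filter_upwards with y
      rw [abs_of_nonneg (hf0 _)]
  refine ⟨hi1, hi2, ?_⟩
  rw [integral_prod _ hi2]
  apply integral_congr_ae
  filter_upwards with x
  rw [integral_mul_const]

lemma marg_two (ν₁ : Measure X) (ν₂ : Measure Y) [IsProbabilityMeasure ν₁]
    [IsProbabilityMeasure ν₂] (f : X × Y → ℝ) (hf0 : ∀ z, 0 ≤ f z)
    (hf : Integrable f (ν₁.prod ν₂)) (hf1 : ∫ z, f z ∂(ν₁.prod ν₂) = 1)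
    (hfl : Integrable (fun z => f z * Real.log (f z)) (ν₁.prod ν₂))
    (hp1 : ∀ᵐ x ∂ν₁, 0 < ∫ y, f (x, y) ∂ν₂) (hp2 : ∀ᵐ y ∂ν₂, 0 < ∫ x, f (x, y) ∂ν₁) :
    Integrable (fun x => (∫ y, f (x, y) ∂ν₂) * Real.log (∫ y, f (x, y) ∂ν₂)) ν₁ ∧
    Integrable (fun y => (∫ x, f (x, y) ∂ν₁) * Real.log (∫ x, f (x, y) ∂ν₁)) ν₂ ∧
    (∫ x, (∫ y, f (x, y) ∂ν₂) * Real.log (∫ y, f (x, y) ∂ν₂) ∂ν₁) +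
    (∫ y, (∫ x, f (x, y) ∂ν₁) * Real.log (∫ x, f (x, y) ∂ν₁) ∂ν₂) ≤
      ∫ z, f z * Real.log (f z) ∂(ν₁.prod ν₂) := by
  obtain ⟨a1, b1, c1⟩ := marg_one ν₁ ν₂ f hf0 hf hfl
  obtain ⟨a2, b2, c2⟩ := marg_one ν₂ ν₁ (fun z => f z.swap) (fun z => hf0 _) hf.swap hfl.swap
  simp only [Prod.swap_prod_mk] at a2 b2 c2
  have b2' := b2.swap
  have c2' : ∫ z : X × Y, f z * Real.log (∫ x, f (x, z.2) ∂ν₁) ∂(ν₁.prod ν₂) =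
      ∫ y, (∫ x, f (x, y) ∂ν₁) * Real.log (∫ x, f (x, y) ∂ν₁) ∂ν₂ := by
    rw [← c2, ← integral_prod_swap]
    rfl
  have b2'' : Integrable (fun z : X × Y => f z * Real.log (∫ x, f (x, z.2) ∂ν₁))
    (ν₁.prod ν₂) := b2'
  refine ⟨a1, a2, ?_⟩
  have hpr : Integrable (fun z : X × Y => (∫ y, f (z.1, y) ∂ν₂) * (∫ x, f (x, z.2) ∂ν₁))
      (ν₁.prod ν₂) := hf.integral_prod_left.mul_prod hf.integral_prod_right
  have hpr1 : ∫ z : X × Y, (∫ y, f (z.1, y) ∂ν₂) * (∫ x, f (x, z.2) ∂ν₁) ∂(ν₁.prod ν₂) = 1 := by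
    rw [integral_prod_mul (fun x => ∫ y, f (x, y) ∂ν₂) (fun y => ∫ x, f (x, y) ∂ν₁),
      ← integral_prod _ hf, ← integral_prod_symm _ hf, hf1, one_mul]
  have hq1 : ∀ᵐ z : X × Y ∂(ν₁.prod ν₂), 0 < ∫ y, f (z.1, y) ∂ν₂ :=
    Measure.quasiMeasurePreserving_fst.ae hp1
  have hq2 : ∀ᵐ z : X × Y ∂(ν₁.prod ν₂), 0 < ∫ x, f (x, z.2) ∂ν₁ :=
    Measure.quasiMeasurePreserving_snd.ae hp2
  have key : ∫ z : X × Y, ((f z * Real.log (∫ y, f (z.1, y) ∂ν₂) +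
      f z * Real.log (∫ x, f (x, z.2) ∂ν₁)) + f z
      - (∫ y, f (z.1, y) ∂ν₂) * (∫ x, f (x, z.2) ∂ν₁)) ∂(ν₁.prod ν₂) ≤
      ∫ z, f z * Real.log (f z) ∂(ν₁.prod ν₂) := by
    apply integral_mono_ae (((b1.add b2'').add hf).sub hpr) hfl
    filter_upwards [hq1, hq2] with z h1 h2
    have := gibbs_pt (f z) _ (hf0 z) (mul_pos h1 h2)
    rw [Real.log_mul h1.ne' h2.ne', mul_add] at this
    exact this
  have j1 : Integrable (fun z : X × Y => f z * Real.log (∫ y, f (z.1, y) ∂ν₂) +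
      f z * Real.log (∫ x, f (x, z.2) ∂ν₁)) (ν₁.prod ν₂) := b1.add b2''
  have j2 : Integrable (fun z : X × Y => f z * Real.log (∫ y, f (z.1, y) ∂ν₂) +
      f z * Real.log (∫ x, f (x, z.2) ∂ν₁) + f z) (ν₁.prod ν₂) := j1.add hf
  rw [integral_sub j2 hpr, integral_add j1 hf,
    integral_add b1 b2'', hf1, hpr1, c1, c2'] at key
  linarith

lemma prod_ent (ν₁ : Measure X) (ν₂ : Measure Y) [IsProbabilityMeasure ν₁]
    [IsProbabilityMeasure ν₂] (f : X → ℝ) (g : Y → ℝ)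
    (hf : Integrable f ν₁) (hf1 : ∫ z, f z ∂ν₁ = 1)
    (hg : Integrable g ν₂) (hg1 : ∫ z, g z ∂ν₂ = 1)
    (hfl : Integrable (fun z => f z * Real.log (f z)) ν₁)
    (hgl : Integrable (fun z => g z * Real.log (g z)) ν₂) :
    Integrable (fun z : X × Y => (f z.1 * g z.2) * Real.log (f z.1 * g z.2)) (ν₁.prod ν₂) ∧
    ∫ z : X × Y, (f z.1 * g z.2) * Real.log (f z.1 * g z.2) ∂(ν₁.prod ν₂) =
     (∫ z, f z * Real.log (f z) ∂ν₁) + ∫ z, g z * Real.log (g z) ∂ν₂ := by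
  have e : (fun z : X × Y => (f z.1 * g z.2) * Real.log (f z.1 * g z.2)) =
      fun z => (f z.1 * Real.log (f z.1)) * g z.2 + f z.1 * (g z.2 * Real.log (g z.2)) := by
    funext z
    by_cases h1 : f z.1 = 0
    · simp [h1]
    by_cases h2 : g z.2 = 0
    · simp [h2]
    rw [Real.log_mul h1 h2]; ring
  have i1 := hfl.mul_prod hg
  have i2 := hf.mul_prod hgl
  rw [e]
  refine ⟨i1.add i2, ?_⟩
  rw [integral_add i1 i2, integral_prod_mul (fun x => f x * Real.log (f x)) g,
    integral_prod_mul f (fun x => g x * Real.log (g x)), hf1, hg1]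
  ring

/-- midpoint -/
lemma mid_ent (ν : Measure X) [IsProbabilityMeasure ν] (f g : X → ℝ) (hf0 : ∀ x, 0 ≤ f x)
    (hg0 : ∀ x, 0 ≤ g x) (hf : Integrable f ν) (hg : Integrable g ν)
    (hfl : Integrable (fun z => f z * Real.log (f z)) ν)
    (hgl : Integrable (fun z => g z * Real.log (g z)) ν) :
    Integrable (fun z => ((f z + g z) / 2) * Real.log ((f z + g z) / 2)) ν ∧
    (((∫ z, f z * Real.log (f z) ∂ν) + ∫ z, g z * Real.log (g z) ∂ν) / 2 ≤
      ∫ z, ((f z + g z) / 2) * Real.log ((f z + g z) / 2) ∂ν → f =ᵐ[ν] g) := by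
  have hpt : ∀ z, ((f z + g z) / 2) * Real.log ((f z + g z) / 2) ≤
      (f z * Real.log (f z) + g z * Real.log (g z)) / 2 := by
    intro z
    have := (Real.convexOn_mul_log).2 (hf0 z) (hg0 z) (show (0:ℝ) ≤ 1/2 by norm_num)
      (show (0:ℝ) ≤ 1/2 by norm_num) (by norm_num)
    simp only [smul_eq_mul] at this
    have e : (f z + g z) / 2 = 1 / 2 * f z + 1 / 2 * g z := by ring
    rw [e]; linarith
  have hstr : ∀ z, (f z * Real.log (f z) + g z * Real.log (g z)) / 2 ≤
     ((f z + g z) / 2) * Real.log ((f z + g z) / 2) → f z = g z := by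
    intro z hz
    by_contra hne
    have := (Real.strictConvexOn_mul_log).2 (hf0 z) (hg0 z) hne (show (0:ℝ) < 1/2 by norm_num)
      (show (0:ℝ) < 1/2 by norm_num) (by norm_num)
    simp only [smul_eq_mul] at this
    have e : (f z + g z) / 2 = 1 / 2 * f z + 1 / 2 * g z := by ring
    rw [e] at hz; linarith
  have hi : Integrable (fun z => ((f z + g z) / 2) * Real.log ((f z + g z) / 2)) ν := by
    refine Integrable.mono' (((hfl.norm.add hgl.norm)).add (integrable_const (1 : ℝ))) ?_ ?_
    · exact Real.continuous_mul_log.comp_aestronglyMeasurable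
        ((hf.add hg).div_const 2).aestronglyMeasurable
    · filter_upwards with z
      have h1 := hpt z
      have h2 := xl_lower ((f z + g z) / 2) (by have := hf0 z; have := hg0 z; positivity)
      have := hf0 z
      have := hg0 z
      have a1 := le_abs_self (f z * Real.log (f z))
      have a2 := le_abs_self (g z * Real.log (g z))
      have a3 := abs_nonneg (f z * Real.log (f z))
      have a4 := abs_nonneg (g z * Real.log (g z))
      simp only [Pi.add_apply, Real.norm_eq_abs] at *
      rw [abs_le]
      constructor <;> linarith
  refine ⟨hi, fun hle => ?_⟩
  have hd : Integrable (fun z => (f z * Real.log (f z) + g z * Real.log (g z)) / 2 -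
      ((f z + g z) / 2) * Real.log ((f z + g z) / 2)) ν := ((hfl.add hgl).div_const 2).sub hi
  have h0 : 0 ≤ᵐ[ν] (fun z => (f z * Real.log (f z) + g z * Real.log (g z)) / 2 -
      ((f z + g z) / 2) * Real.log ((f z + g z) / 2)) := by
    filter_upwards with z
    have := hpt z
    simp only [Pi.zero_apply]; linarith
  have hz : ∫ z, ((f z * Real.log (f z) + g z * Real.log (g z)) / 2 -
      ((f z + g z) / 2) * Real.log ((f z + g z) / 2)) ∂ν = 0 := by
    apply le_antisymm _ (integral_nonneg_of_ae h0)
    have j : Integrable (fun z => (f z * Real.log (f z) + g z * Real.log (g z)) / 2) ν :=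
      (hfl.add hgl).div_const 2
    rw [integral_sub j hi, integral_div, integral_add hfl hgl]
    linarith
  have := (integral_eq_zero_iff_of_nonneg_ae h0 hd).1 hz
  filter_upwards [this] with z hz
  apply hstr
  simp only [Pi.zero_apply] at hz
  linarith

end abstractprod

end

section

lemma lsc_meas {P : Set (ι → ℝ)} (hP : MeasurableSet P) {u : (ι → ℝ) → ℝ≥0∞}
    (hu : LowerSemicontinuousOn u P) : Measurable (P.indicator u) := by
  apply measurable_of_Ioi
  intro a
  obtain ⟨o, ho, h⟩ := lowerSemicontinuousOn_iff_preimage_Ioi.1 hu a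
  have : P.indicator u ⁻¹' Set.Ioi a = P ∩ o := by
    rw [← h]
    ext x
    by_cases hx : x ∈ P <;> simp [hx]
  rw [this]
  exact hP.inter ho.measurableSet

lemma lim_geo (a b : ℝ≥0∞) (ha0 : a ≠ 0) (ha : a ≠ ⊤) (hb0 : b ≠ 0) (hb : b ≠ ⊤) :
    Tendsto (fun k : ℕ => a ^ (1 - 1 / ((k : ℝ) + 1)) * b ^ (1 / ((k : ℝ) + 1))) atTop (𝓝 a) := by
  lift a to ℝ≥0 using ha
  lift b to ℝ≥0 using hb
  have ha' : a ≠ 0 := by simpa using ha0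
  have hb' : b ≠ 0 := by simpa using hb0
  have h0 : Tendsto (fun k : ℕ => 1 / ((k : ℝ) + 1)) atTop (𝓝 0) :=
    tendsto_one_div_add_atTop_nhds_zero_nat
  have h1 : Tendsto (fun k : ℕ => 1 - 1 / ((k : ℝ) + 1)) atTop (𝓝 1) := by
    simpa using h0.const_sub 1
  have e : (fun k : ℕ => (a : ℝ≥0∞) ^ (1 - 1 / ((k : ℝ) + 1)) * (b : ℝ≥0∞) ^ (1 / ((k : ℝ) + 1)))
      = fun k : ℕ => ((a ^ (1 - 1 / ((k : ℝ) + 1)) * b ^ (1 / ((k : ℝ) + 1)) : ℝ≥0) : ℝ≥0∞) := by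
    funext k
    rw [ENNReal.coe_mul, ENNReal.coe_rpow_of_ne_zero ha', ENNReal.coe_rpow_of_ne_zero hb']
  rw [e, ENNReal.tendsto_coe]
  have t1 := Tendsto.nnrpow (tendsto_const_nhds (x := a)) h1 (Or.inl ha')
  have t2 := Tendsto.nnrpow (tendsto_const_nhds (x := b)) h0 (Or.inl hb')
  simpa using t1.mul t2

lemma preimage_null (c : ι → ℝ) (t : ℝ) (ht : t ≠ 0) (N : Set (ι → ℝ)) (hN : volume N = 0) :
    volume {z | c + t • z ∈ N} = 0 := by
  have : {z | c + t • z ∈ N} = (fun z : ι → ℝ => t • z) ⁻¹' ((fun z => c + z) ⁻¹' N) := rfl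
  rw [this, Measure.addHaar_preimage_smul _ ht, measure_preimage_add, hN, mul_zero]

lemma le_of_ae {P : Set (ι → ℝ)} (hc : Convex ℝ P) {u w : (ι → ℝ) → ℝ≥0∞}
    (hu : LowerSemicontinuousOn u P)
    (hw : LogConvexOn P w) (hw0 : ∀ x ∈ P, 0 < w x) {x : ι → ℝ} (hx : x ∈ P)
    {z : ι → ℝ} (hz : z ∈ P) (hwz : w z ≠ ⊤)
    (heq : ∀ k : ℕ, u ((1 - 1 / ((k : ℝ) + 1)) • x + (1 / ((k : ℝ) + 1)) • z) =
      w ((1 - 1 / ((k : ℝ) + 1)) • x + (1 / ((k : ℝ) + 1)) • z)) : u x ≤ w x := by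
  by_cases hwx : w x = ⊤
  · rw [hwx]; exact le_top
  have h0 : Tendsto (fun k : ℕ => 1 / ((k : ℝ) + 1)) atTop (𝓝 0) :=
    tendsto_one_div_add_atTop_nhds_zero_nat
  have hk0 : ∀ k : ℕ, 0 ≤ 1 / ((k : ℝ) + 1) := fun k => by positivity
  have hk1 : ∀ k : ℕ, 1 / ((k : ℝ) + 1) ≤ 1 := fun k => by
    rw [div_le_one (by positivity)]; have : (0 : ℝ) ≤ k := by positivity
    linarith
  have hlim : Tendsto (fun k : ℕ => (1 - 1 / ((k : ℝ) + 1)) • x + (1 / ((k : ℝ) + 1)) • z) atTop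
      (𝓝[P] x) := by
    rw [tendsto_nhdsWithin_iff]
    constructor
    · have := ((h0.const_sub 1).smul_const x).add (h0.smul_const z)
      simpa using this
    · exact Eventually.of_forall fun k => hc hx hz (by have := hk1 k; linarith) (hk0 k) (by ring)
  have hg := lim_geo (w x) (w z) (hw0 x hx).ne' hwx (hw0 z hz).ne' hwz
  refine le_of_forall_lt fun a ha => ?_
  by_contra hcon
  push Not at hcon
  obtain ⟨b, hab, hbu⟩ := exists_between ha
  have e1 := hlim.eventually (hu x hx b hbu)
  have e2 : ∀ᶠ k : ℕ in atTop,
    (w x) ^ (1 - 1 / ((k : ℝ) + 1)) * (w z) ^ (1 / ((k : ℝ) + 1)) < b :=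
    hg.eventually (gt_mem_nhds (hcon.trans_lt hab))
  obtain ⟨k, h1, h2⟩ := (e1.and e2).exists
  rw [heq k] at h1
  exact absurd ((h1.trans_le (hw hx hz (hk0 k) (hk1 k))).trans h2) (lt_irrefl _)

lemma eqOn_of_ae {P : Set (ι → ℝ)} (hc : Convex ℝ P) (hP : MeasurableSet P)
    (hP0 : volume P ≠ 0) {u w : (ι → ℝ) → ℝ≥0∞}
    (hu : LowerSemicontinuousOn u P) (hw : LowerSemicontinuousOn w P)
    (huc : LogConvexOn P u) (hwc : LogConvexOn P w)
    (hu0 : ∀ x ∈ P, 0 < u x) (hw0 : ∀ x ∈ P, 0 < w x)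
    (huf : ∀ᵐ x ∂volume.restrict P, u x ≠ ⊤) (hwf : ∀ᵐ x ∂volume.restrict P, w x ≠ ⊤)
    (h : ∀ᵐ x ∂volume.restrict P, u x = w x) : Set.EqOn u w P := by
  intro x hx
  have hk0 : ∀ k : ℕ, 0 < 1 / ((k : ℝ) + 1) := fun k => by positivity
  have hk1 : ∀ k : ℕ, 1 / ((k : ℝ) + 1) ≤ 1 := fun k => by
    rw [div_le_one (by positivity)]; have : (0 : ℝ) ≤ k := by positivity
    linarith
  rw [ae_restrict_iff' hP] at h
  have hN : ∀ᵐ z ∂volume.restrict P, ∀ k : ℕ,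
      u ((1 - 1 / ((k : ℝ) + 1)) • x + (1 / ((k : ℝ) + 1)) • z) =
      w ((1 - 1 / ((k : ℝ) + 1)) • x + (1 / ((k : ℝ) + 1)) • z) := by
    rw [ae_all_iff]
    intro k
    rw [ae_restrict_iff' hP]
    have := preimage_null ((1 - 1 / ((k : ℝ) + 1)) • x) (1 / ((k : ℝ) + 1)) (hk0 k).ne'
      _ (ae_iff.1 h)
    have h2 : ∀ᵐ z : ι → ℝ, ((1 - 1 / ((k : ℝ) + 1)) • x + (1 / ((k : ℝ) + 1)) • z) ∈ P →
      u ((1 - 1 / ((k : ℝ) + 1)) • x + (1 / ((k : ℝ) + 1)) • z) =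
      w ((1 - 1 / ((k : ℝ) + 1)) • x + (1 / ((k : ℝ) + 1)) • z) := by
      rw [ae_iff]; exact this
    filter_upwards [h2] with z hz hzP
    exact hz (hc hx hzP (by have := hk1 k; linarith) (hk0 k).le (by ring))
  have hne : (ae (volume.restrict P)).NeBot := by
    rw [ae_neBot]
    intro h0
    exact hP0 (by simpa using h0)
  obtain ⟨z, h1, h2, h3, h4⟩ :=
    (hN.and (huf.and (hwf.and (ae_restrict_mem hP)))).exists
  exact le_antisymm (le_of_ae hc hu hwc hw0 hx h4 h3 h1)
    (le_of_ae hc hw huc hu0 hx h4 h2 (fun k => (h1 k).symm))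

lemma holder_two (a b c d : ℝ≥0∞) (t : ℝ) (h0 : 0 ≤ t) (h1 : t ≤ 1) :
    a ^ (1 - t) * b ^ t + c ^ (1 - t) * d ^ t ≤ (a + c) ^ (1 - t) * (b + d) ^ t := by
  have := ENNReal.lintegral_mul_norm_pow_le (μ := (Measure.count : Measure Bool))
    (f := fun i => cond i a c) (g := fun i => cond i b d) (measurable_of_countable _).aemeasurable
    (measurable_of_countable _).aemeasurable (p := 1 - t) (q := t) (by linarith) h0 (by ring)
  simpa [lintegral_count, tsum_fintype] using this

lemma logc_mid {P : Set (ι → ℝ)} {u w : (ι → ℝ) → ℝ≥0∞}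
    (huc : LogConvexOn P u) (hwc : LogConvexOn P w) :
    LogConvexOn P (fun x => (u x + w x) / 2) := by
  intro x hx y hy t h0 h1
  have h2 : (0:ℝ) ≤ 1 - t := by linarith
  have e : ((u x + w x) / 2) ^ (1 - t) * ((u y + w y) / 2) ^ t =
      (u x + w x) ^ (1 - t) * (u y + w y) ^ t / 2 := by
    rw [div_eq_mul_inv, div_eq_mul_inv, ENNReal.mul_rpow_of_nonneg _ _ h2,
      ENNReal.mul_rpow_of_nonneg _ _ h0, div_eq_mul_inv]
    have : (2⁻¹ : ℝ≥0∞) ^ (1 - t) * (2⁻¹ : ℝ≥0∞) ^ t = 2⁻¹ := by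
      rw [← ENNReal.rpow_add_of_nonneg _ _ h2 h0]; simp
    rw [mul_mul_mul_comm, this]
  simp only
  rw [e]
  gcongr
  exact (add_le_add (huc hx hy h0 h1) (hwc hx hy h0 h1)).trans (holder_two _ _ _ _ t h0 h1)

lemma lsc_mid {P : Set (ι → ℝ)} {u w : (ι → ℝ) → ℝ≥0∞}
    (hu : LowerSemicontinuousOn u P) (hw : LowerSemicontinuousOn w P) :
    LowerSemicontinuousOn (fun x => (u x + w x) / 2) P := by
  have h := hu.add hw
  rw [lowerSemicontinuousOn_iff_le_liminf] at h ⊢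
  intro x hx
  have := h x hx
  simp only [div_eq_mul_inv]
  calc (u x + w x) * 2⁻¹ ≤ liminf (fun x => u x + w x) (𝓝[P] x) * liminf (fun _ => 2⁻¹) (𝓝[P] x) := by
        have : (𝓝[P] x).NeBot := mem_closure_iff_nhdsWithin_neBot.1 (subset_closure hx)
        rw [liminf_const]
        gcongr
    _ ≤ _ := ENNReal.le_liminf_mul

/-- key one-dimensional bound -/
lemma oneD (c : ℝ) (hc : 1 ≤ c) (M : ℝ≥0∞) (v : ℝ → ℝ≥0∞)
    (hv : ∀ t, 0 ≤ t → t ≤ 1 → v t ≤ ENNReal.ofReal c ^ (1 - t) * M ^ t) :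
    ∫⁻ t in Set.Ioo (0:ℝ) 1, ENNReal.ofReal (xlogx (v t)) ≤
      ENNReal.ofReal (Real.log c + 1) * (M + ENNReal.ofReal c) := by
  have hlc : 0 ≤ Real.log c := Real.log_nonneg hc
  by_cases hM : M = ⊤
  · rw [hM, top_add, ENNReal.mul_top]
    · exact le_top
    · simp; linarith
  lift M to ℝ≥0 using hM
  set m : ℝ := M + c with hm
  have hm0 : 0 < m := by positivity
  set l : ℝ := Real.log (m / c) with hl
  have hl0 : 0 ≤ l := Real.log_nonneg (by rw [one_le_div (by positivity), hm]; simp)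
  have hel : c * Real.exp l = m := by
    rw [hl, Real.exp_log (by positivity)]; field_simp
  have hpt : ∀ t ∈ Set.Ioo (0:ℝ) 1, ENNReal.ofReal (xlogx (v t)) ≤
      ENNReal.ofReal (Real.log c * m + c * (Real.exp (t * l) * l)) := by
    intro t ht
    have hle : (v t).toReal ≤ c * Real.exp (t * l) := by
      have h1 := hv t ht.1.le ht.2.le
      have h2 : ENNReal.ofReal c ^ (1 - t) * (M : ℝ≥0∞) ^ t ≤
          ENNReal.ofReal (c * Real.exp (t * l)) := by
        have e : c * Real.exp (t * l) = c ^ (1 - t) * m ^ t := by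
          rw [Real.rpow_def_of_pos (by linarith), Real.rpow_def_of_pos hm0, hl,
            Real.log_div hm0.ne' (by positivity), ← Real.exp_add]
          nth_rewrite 1 [← Real.exp_log (show 0 < c by linarith)]
          rw [← Real.exp_add]
          congr 1; ring
        rw [e, ENNReal.ofReal_mul (by positivity),
          ENNReal.ofReal_rpow_of_pos (by linarith), ← ENNReal.ofReal_rpow_of_pos hm0]
        gcongr
        · exact ht.1.le
        · rw [hm, ENNReal.ofReal_add (by positivity) (by positivity)]
          simp
      exact ENNReal.toReal_le_of_le_ofReal (by positivity) (h1.trans h2)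
    apply ENNReal.ofReal_le_ofReal
    unfold xlogx
    by_cases h1 : (v t).toReal ≤ 1
    · have : Real.log (v t).toReal ≤ 0 := Real.log_nonpos ENNReal.toReal_nonneg h1
      have : (v t).toReal * Real.log (v t).toReal ≤ 0 :=
        mul_nonpos_of_nonneg_of_nonpos ENNReal.toReal_nonneg this
      have : 0 ≤ Real.log c * m + c * (Real.exp (t * l) * l) := by positivity
      linarith
    · push Not at h1
      have hcx : 0 < c * Real.exp (t * l) := by positivity
      calc (v t).toReal * Real.log (v t).toReal ≤
            (c * Real.exp (t * l)) * Real.log (c * Real.exp (t * l)) := by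
              gcongr
              exact Real.log_nonneg h1.le
        _ = Real.log c * (c * Real.exp (t * l)) + t * (c * (Real.exp (t * l) * l)) := by
              rw [Real.log_mul (by positivity) (by positivity), Real.log_exp]; ring
        _ ≤ Real.log c * m + 1 * (c * (Real.exp (t * l) * l)) := by
              have h3 : t * l ≤ l := by nlinarith [ht.2]
              have : c * Real.exp (t * l) ≤ m := by rw [← hel]; gcongr
              gcongr
              exact ht.2.le
        _ = _ := by ring
  refine (setLIntegral_mono' measurableSet_Ioo hpt).trans ?_
  have hder : ∀ t ∈ Set.uIcc (0:ℝ) 1, HasDerivAt (fun t => Real.log c * m * t + c * Real.exp (t * l))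
      (Real.log c * m + c * (Real.exp (t * l) * l)) t := by
    intro t _
    have h1 : HasDerivAt (fun t : ℝ => t * l) l t := by simpa using (hasDerivAt_id t).mul_const l
    have h2 := (h1.exp).const_mul c
    have h3 := (hasDerivAt_id t).const_mul (Real.log c * m)
    exact (h3.add h2).congr_deriv (by ring)
  have hcont : Continuous (fun t : ℝ => Real.log c * m + c * (Real.exp (t * l) * l)) := by fun_prop
  have hint := intervalIntegral.integral_eq_sub_of_hasDerivAt hder (hcont.intervalIntegrable 0 1)
  rw [← ofReal_integral_eq_lintegral_ofReal
    ((hcont.integrableOn_Icc (a := 0) (b := 1)).mono_set Set.Ioo_subset_Icc_self)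
    (Eventually.of_forall fun t => by simp only [Pi.zero_apply]; positivity)]
  rw [← integral_Ioc_eq_integral_Ioo, ← intervalIntegral.integral_of_le zero_le_one, hint]
  simp only [mul_one, one_mul, mul_zero, zero_mul, Real.exp_zero, zero_add]
  rw [hel]
  have e2 : (M : ℝ≥0∞) + ENNReal.ofReal c = ENNReal.ofReal m := by
    rw [hm, ENNReal.ofReal_add (by positivity) (by positivity)]
    simp
  rw [e2, ← ENNReal.ofReal_mul (by positivity)]
  apply ENNReal.ofReal_le_ofReal
  linarith

end

section

lemma aff_add (L : (ι → ℝ) →ᵃ[ℝ] ℝ) (x v : ι → ℝ) (e : ℝ) :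
    L (x + e • v) = L x + e * L.linear v := by
  have := L.map_vadd x (e • v)
  simp only [vadd_eq_add, map_smul, smul_eq_mul] at this
  rw [add_comm x, this]; ring

lemma aff_comb (L : (ι → ℝ) →ᵃ[ℝ] ℝ) (x y : ι → ℝ) (t : ℝ) :
    L ((1 - t) • x + t • y) = (1 - t) * L x + t * L y := by
  have h1 : (1 - t) • x + t • y = x + t • (y - x) := by
    rw [sub_smul, smul_sub, one_smul]; abel
  have h2 := aff_add L x (y - x) 1
  rw [one_smul, add_sub_cancel] at h2
  rw [h1, aff_add, h2]; ring

lemma interior_pos {P : Set (ι → ℝ)} (L : (ι → ℝ) →ᵃ[ℝ] ℝ) (hL : L ≠ 0)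
    (hP : ∀ y ∈ P, 0 ≤ L y) {x : ι → ℝ} (hx : x ∈ interior P) : 0 < L x := by
  rcases (hP x (interior_subset hx)).lt_or_eq with h | h
  · exact h
  exfalso
  apply hL
  have hlin : ∀ v, 0 ≤ L.linear v := by
    intro v
    have hc : ContinuousAt (fun e : ℝ => x + e • v) 0 := by fun_prop
    have hmem : ∀ᶠ e : ℝ in 𝓝 0, x + e • v ∈ interior P :=
      hc.eventually_mem (isOpen_interior.mem_nhds (by simpa using hx))
    have h2 : ∀ᶠ e : ℝ in 𝓝[>] 0, x + e • v ∈ interior P := hmem.filter_mono nhdsWithin_le_nhds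
    obtain ⟨e, he, he0⟩ := (h2.and self_mem_nhdsWithin).exists
    have := hP _ (interior_subset he)
    rw [aff_add, ← h, zero_add] at this
    exact nonneg_of_mul_nonneg_right this he0
  have hz : ∀ v, L.linear v = 0 := fun v => le_antisymm
    (by have := hlin (-v); rw [map_neg] at this; linarith) (hlin v)
  ext y
  have := aff_add L x (y - x) 1
  rw [one_smul, add_sub_cancel, hz, ← h] at this
  simpa using this

lemma facet_of_point {m : ℕ} (K : Finset (Fin m)) (L : Fin m → ((ι → ℝ) →ᵃ[ℝ] ℝ))
    {P : Set (ι → ℝ)} (hP : P = {x | ∀ k ∈ K, 0 ≤ L k x}) (k : Fin m) (hk : k ∈ K)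
    (hl : (L k).linear ≠ 0) (w : ι → ℝ) (hw : L k w = 0)
    (hw' : ∀ j ∈ K, j ≠ k → 0 < L j w) : IsFacetOf P {x ∈ P | L k x = 0} := by
  refine ⟨⟨L k, ?_, ?_, rfl⟩, ?_⟩
  · rintro h; apply hl; rw [h]; simp
  · intro y hy; rw [hP] at hy; exact hy k hk
  have hwP : w ∈ P := by
    rw [hP]; intro j hj
    by_cases h : j = k
    · rw [h, hw]
    · exact (hw' j hj h).le
  have : vectorSpan ℝ {x ∈ P | L k x = 0} = LinearMap.ker (L k).linear := by
    apply le_antisymm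
    · rw [vectorSpan_def, Submodule.span_le]
      rintro _ ⟨a, ha, b, hb, rfl⟩
      simp only [SetLike.mem_coe, LinearMap.mem_ker]
      have h1 : (L k).linear (a -ᵥ b) = L k a -ᵥ L k b := (L k).linearMap_vsub a b
      have ha2 : L k a = 0 := ha.2
      have hb2 : L k b = 0 := hb.2
      rw [h1, ha2, hb2]; simp
    · intro v hv
      rw [LinearMap.mem_ker] at hv
      have h2 : ∀ᶠ e : ℝ in 𝓝[>] 0, ∀ j ∈ K, 0 ≤ L j (w + e • v) := by
        rw [Filter.eventually_all_finset]
        intro j hj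
        by_cases h : j = k
        · filter_upwards with e
          rw [h, aff_add, hv, hw]; simp
        · have hc : ContinuousAt (fun e : ℝ => L j w + e * (L j).linear v) 0 := by fun_prop
          have : ∀ᶠ e : ℝ in 𝓝 0, 0 < L j w + e * (L j).linear v :=
            hc.eventually (lt_mem_nhds (by simpa using hw' j hj h))
          filter_upwards [this.filter_mono nhdsWithin_le_nhds] with e he
          rw [aff_add]; exact he.le
      obtain ⟨e, he, he0⟩ := (h2.and self_mem_nhdsWithin).exists
      have hm : w + e • v ∈ {x ∈ P | L k x = 0} := by
        refine ⟨by rw [hP]; exact he, ?_⟩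
        rw [aff_add, hv, hw]; simp
      have hd := vsub_mem_vectorSpan ℝ hm (show w ∈ {x ∈ P | L k x = 0} from ⟨hwP, hw⟩)
      simp only [vsub_eq_sub, add_sub_cancel_left] at hd
      have he0' : (e : ℝ) ≠ 0 := (Set.mem_Ioi.1 he0).ne'
      have := Submodule.smul_mem _ e⁻¹ hd
      rwa [smul_smul, inv_mul_cancel₀ he0', one_smul] at this
  rw [this, Module.Dual.finrank_ker_add_one_of_ne_zero hl, Module.finrank_pi]

lemma polytope_rep {P : Set (ι → ℝ)} (h : IsPolytope P) :
    ∃ (m : ℕ) (K : Finset (Fin m)) (L : Fin m → ((ι → ℝ) →ᵃ[ℝ] ℝ)),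
      P = {x | ∀ k ∈ K, 0 ≤ L k x} ∧ (∀ k ∈ K, ∀ x ∈ interior P, 0 < L k x) ∧
      (∀ k ∈ K, (L k).linear ≠ 0) ∧
      ∀ k ∈ K, IsFacetOf P {x ∈ P | L k x = 0} := by
  obtain ⟨-, ⟨x0, hx0⟩, m, L, hL0, hP⟩ := h
  obtain ⟨K, hK, hmin⟩ := exists_minimal_of_wellFoundedLT
    (fun K : Finset (Fin m) => P = {x | ∀ k ∈ K, 0 ≤ L k x})
    ⟨Finset.univ, by rw [hP]; ext x; simp⟩
  have hnn : ∀ k ∈ K, ∀ y ∈ P, 0 ≤ L k y := by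
    intro k hk y hy; rw [hK] at hy; exact hy k hk
  have hpos : ∀ k ∈ K, ∀ x ∈ interior P, 0 < L k x := fun k hk x hx =>
    interior_pos (L k) (hL0 k) (hnn k hk) hx
  have hz : ∀ k ∈ K, ∃ z, L k z < 0 ∧ ∀ j ∈ K, j ≠ k → 0 ≤ L j z := by
    intro k hk
    by_contra hcon
    push Not at hcon
    have : K ≤ K.erase k := hmin (by
      rw [hK]
      ext x
      simp only [Set.mem_ofPred_eq, Finset.mem_erase]
      constructor
      · intro hx j hj; exact hx j hj.2
      · intro hx j hj
        by_cases hjk : j = k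
        · by_contra hneg
          push Not at hneg
          rw [hjk] at hneg
          obtain ⟨j', hj', hne, hlt⟩ := hcon x hneg
          exact absurd (hx j' ⟨hne, hj'⟩) (not_le.2 hlt)
        · exact hx j ⟨hjk, hj⟩) (Finset.erase_subset _ _)
    exact absurd (this hk) (by simp)
  have hlin : ∀ k ∈ K, (L k).linear ≠ 0 := by
    intro k hk h0
    obtain ⟨z, hz1, -⟩ := hz k hk
    have := aff_add (L k) x0 (z - x0) 1
    rw [one_smul, add_sub_cancel, h0] at this
    have hp := hpos k hk x0 hx0
    simp at this
    linarith
  refine ⟨m, K, L, hK, hpos, hlin, fun k hk => ?_⟩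
  obtain ⟨z, hz1, hz2⟩ := hz k hk
  have hp := hpos k hk x0 hx0
  set t : ℝ := L k x0 / (L k x0 - L k z) with ht
  have hd : 0 < L k x0 - L k z := by linarith
  have ht0 : 0 < t := by positivity
  have ht1 : t < 1 := by rw [ht, div_lt_one hd]; linarith
  refine facet_of_point K L hK k hk (hlin k hk) ((1 - t) • x0 + t • z) ?_ ?_
  · rw [aff_comb, ht]; field_simp; ring
  · intro j hj hjk
    rw [aff_comb]
    have h1 := hpos j hj x0 hx0
    have h2 := hz2 j hj hjk
    have h3 : 0 < (1 - t) * L j x0 := mul_pos (by linarith) h1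
    have h4 : 0 ≤ t * L j z := mul_nonneg ht0.le h2
    linarith

lemma aff_cont (L : (ι → ℝ) →ᵃ[ℝ] ℝ) : Continuous L := L.continuous_of_finiteDimensional

lemma frontier_cover {P : Set (ι → ℝ)} (hPc : IsClosed P) {m : ℕ} (K : Finset (Fin m))
    (L : Fin m → ((ι → ℝ) →ᵃ[ℝ] ℝ)) (hP : P = {x | ∀ k ∈ K, 0 ≤ L k x}) {x : ι → ℝ}
    (hx : x ∈ frontier P) : ∃ k ∈ K, x ∈ {x ∈ P | L k x = 0} := by
  have hxP : x ∈ P := hPc.frontier_subset hx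
  by_contra hcon
  push Not at hcon
  have hpos : ∀ k ∈ K, 0 < L k x := by
    intro k hk
    have h1 : 0 ≤ L k x := by rw [hP] at hxP; exact hxP k hk
    exact lt_of_le_of_ne h1 (fun h => hcon k hk ⟨hxP, h.symm⟩)
  have : ∀ᶠ y in 𝓝 x, ∀ k ∈ K, 0 < L k y := by
    rw [Filter.eventually_all_finset]
    intro k hk
    exact (aff_cont (L k)).continuousAt.eventually (lt_mem_nhds (hpos k hk))
  have hi : x ∈ interior P := by
    rw [mem_interior_iff_mem_nhds]
    filter_upwards [this] with y hy
    rw [hP]; exact fun k hk => (hy k hk).le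
  exact hx.2 hi

end

section

lemma hyper_param (l : (ι → ℝ) →ₗ[ℝ] ℝ) (hl : l ≠ 0) :
    ∃ (J : Type) (_ : Fintype J) (r : (ι → ℝ) →L[ℝ] (J → ℝ)) (A : (ι → ℝ) ≃L[ℝ] (ℝ × (J → ℝ))),
      (∀ x, A x = (l x, r x)) ∧ LipschitzWith 1 r ∧ ((Fintype.card J : ℝ) = Fintype.card ι - 1) := by
  classical
  have : ∃ i, l (Pi.single i 1) ≠ 0 := by
    by_contra hcon
    push Not at hcon
    apply hl
    apply LinearMap.pi_ext'
    intro i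
    ext
    simpa using hcon i
  obtain ⟨i, hi⟩ := this
  let r : (ι → ℝ) →ₗ[ℝ] ({j // j ≠ i} → ℝ) := LinearMap.funLeft ℝ ℝ Subtype.val
  let A₀ : (ι → ℝ) →ₗ[ℝ] (ℝ × ({j // j ≠ i} → ℝ)) := l.prod r
  have hcard : Fintype.card {j // j ≠ i} + 1 = Fintype.card ι := by
    have : 0 < Fintype.card ι := Fintype.card_pos_iff.2 ⟨i⟩
    simp only [ne_eq, Fintype.card_subtype_compl, Fintype.card_unique]
    omega
  have hinj : Function.Injective A₀ := by
    rw [← LinearMap.ker_eq_bot, LinearMap.ker_eq_bot']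
    intro x hx
    have h1 : l x = 0 := congrArg Prod.fst hx
    have h2 : ∀ j, j ≠ i → x j = 0 := fun j hj => congrFun (congrArg Prod.snd hx) ⟨j, hj⟩
    have h3 : x = x i • Pi.single i (1:ℝ) := by
      ext j
      by_cases hj : j = i
      · subst hj; simp
      · simp [hj, h2 j hj]
    rw [h3, map_smul, smul_eq_mul] at h1
    have : x i = 0 := (mul_eq_zero.1 h1).resolve_right hi
    rw [h3, this, zero_smul]
  have hfr : Module.finrank ℝ (ι → ℝ) = Module.finrank ℝ (ℝ × ({j // j ≠ i} → ℝ)) := by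
    rw [Module.finrank_prod, Module.finrank_pi, Module.finrank_pi, Module.finrank_self]
    omega
  refine ⟨{j // j ≠ i}, inferInstance, r.toContinuousLinearMap,
    (LinearMap.linearEquivOfInjective A₀ hinj hfr).toContinuousLinearEquiv, fun x => rfl, ?_, ?_⟩
  · apply LipschitzWith.of_dist_le_mul
    intro x y
    rw [NNReal.coe_one, one_mul, dist_pi_le_iff dist_nonneg]
    intro j
    exact dist_le_pi_dist x y j.1
  · rw [← hcard]; simp

lemma facet_fin (L : (ι → ℝ) →ᵃ[ℝ] ℝ) (hl : L.linear ≠ 0) {P : Set (ι → ℝ)} (hP : IsCompact P) :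
    Measure.hausdorffMeasure ((Fintype.card ι : ℝ) - 1) {x ∈ P | L x = 0} < ⊤ := by
  obtain ⟨J, _, r, A, hA, hr, hcard⟩ := hyper_param L.linear hl
  rw [← hcard]
  set F := {x ∈ P | L x = 0} with hF
  let s : (J → ℝ) → (ι → ℝ) := fun y => A.symm (-(L 0), y)
  have hs : LipschitzWith ‖(A.symm : (ℝ × (J → ℝ)) →L[ℝ] (ι → ℝ))‖₊ s := by
    have h1 := (A.symm : (ℝ × (J → ℝ)) →L[ℝ] (ι → ℝ)).lipschitz
    have h2 : LipschitzWith 1 (fun y : J → ℝ => ((-(L 0) : ℝ), y)) := by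
      apply LipschitzWith.of_dist_le_mul
      intro x y
      simp [Prod.dist_eq]
    have h3 := h1.comp h2
    rw [mul_one] at h3
    exact h3
  have hsub : F ⊆ s '' (r '' P) := by
    rintro x ⟨hx, hx0⟩
    refine ⟨r x, ⟨x, hx, rfl⟩, ?_⟩
    show A.symm _ = x
    rw [ContinuousLinearEquiv.symm_apply_eq, hA]
    have := aff_add L 0 x 1
    rw [one_smul, zero_add, hx0] at this
    congr 1
    linarith
  refine (measure_mono hsub).trans_lt ((hs.hausdorffMeasure_image_le (by positivity) _).trans_lt ?_)
  rw [hausdorffMeasure_pi_real]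
  apply ENNReal.mul_lt_top
  · exact ENNReal.rpow_lt_top_of_nonneg (by positivity) ENNReal.coe_ne_top
  · exact (hP.image r.continuous).measure_lt_top

lemma cone_bound (L : (ι → ℝ) →ᵃ[ℝ] ℝ) (hl : L.linear ≠ 0) {P : Set (ι → ℝ)} (hP : IsCompact P)
    (x0 : ι → ℝ) (hx0 : 0 < L x0) :
    ∃ C : ℝ≥0∞, C ≠ ⊤ ∧ ∀ (g : (ι → ℝ) → ℝ≥0∞), Measurable g →
      ∫⁻ x in {x | 0 < 1 - L x / L x0 ∧ 1 - L x / L x0 ≤ 1 ∧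
        x0 + (1 - L x / L x0)⁻¹ • (x - x0) ∈ {x ∈ P | L x = 0}}, g x ≤
      C * ∫⁻ b in {x ∈ P | L x = 0}, (∫⁻ t in Set.Ioc (0:ℝ) 1, g ((1 - t) • x0 + t • b))
        ∂(Measure.hausdorffMeasure ((Fintype.card ι : ℝ) - 1)) := by
  set l : (ι → ℝ) →ₗ[ℝ] ℝ := (-(L x0)⁻¹) • L.linear with hldef
  have hl' : l ≠ 0 := smul_ne_zero (by simp [hx0.ne']) hl
  obtain ⟨J, _, r, A, hA, hr, hcard⟩ := hyper_param l hl'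
  rw [← hcard]
  set F := {x ∈ P | L x = 0} with hF
  have hFm : MeasurableSet F :=
    hP.measurableSet.inter ((isClosed_singleton (x := (0:ℝ))).preimage (aff_cont L)).measurableSet
  set D := {x | 0 < 1 - L x / L x0 ∧ 1 - L x / L x0 ≤ 1 ∧
        x0 + (1 - L x / L x0)⁻¹ • (x - x0) ∈ F} with hD
  have hLm : Measurable L := (aff_cont L).measurable
  have hτm : Measurable (fun x => 1 - L x / L x0) := by fun_prop
  have hDm : MeasurableSet D := by
    apply (measurableSet_lt measurable_const hτm).inter
    apply (measurableSet_le hτm measurable_const).inter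
    have : Measurable (fun x => x0 + (1 - L x / L x0)⁻¹ • (x - x0)) := by
      exact measurable_const.add ((hτm.inv).smul (measurable_id.sub_const x0))
    exact this hFm
  have hlx : ∀ v, 1 - L (x0 + v) / L x0 = l v := by
    intro v
    have := aff_add L x0 v 1
    rw [one_smul] at this
    rw [this, hldef]
    simp only [LinearMap.smul_apply, smul_eq_mul]
    field_simp; ring
  have hHaar : (Measure.map A (volume : Measure (ι → ℝ))).IsAddHaarMeasure :=
    A.isAddHaarMeasure_map volume
  have hmap := Measure.isAddLeftInvariant_eq_smul (Measure.map A (volume : Measure (ι → ℝ)))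
    ((volume : Measure ℝ).prod (volume : Measure (J → ℝ)))
  set C := (Measure.map A (volume : Measure (ι → ℝ))).addHaarScalarFactor
    ((volume : Measure ℝ).prod (volume : Measure (J → ℝ))) with hC
  refine ⟨C, ENNReal.coe_ne_top, fun g hg => ?_⟩
  set ψ : (J → ℝ) → (ι → ℝ) := fun y => x0 + A.symm (1, y) with hψ
  have hψm : Measurable ψ := by
    have : Continuous ψ := by fun_prop
    exact this.measurable
  have hAs : ∀ t y, l (A.symm (t, y)) = t ∧ r (A.symm (t, y)) = y := by
    intro t y
    have := hA (A.symm (t, y))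
    rw [ContinuousLinearEquiv.apply_symm_apply] at this
    exact ⟨(congrArg Prod.fst this).symm, (congrArg Prod.snd this).symm⟩
  have hscale : ∀ (t : ℝ) y, A.symm (t, t • y) = t • A.symm (1, y) := by
    intro t y
    rw [← map_smul]; simp
  set f := D.indicator g with hf
  have hfm : Measurable f := hg.indicator hDm
  -- step 1: change variables
  have s1 : ∫⁻ x in D, g x = C * ∫⁻ t : ℝ, ∫⁻ y : J → ℝ, f (x0 + A.symm (t, y)) := by
    rw [← lintegral_indicator hDm, ← lintegral_add_left_eq_self (D.indicator g) x0]
    have h1 : ∫⁻ x, f (x0 + x) = ∫⁻ z, f (x0 + A.symm z) ∂(Measure.map A volume) := by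
      rw [lintegral_map (by
        have : Continuous (fun z => x0 + A.symm z) := by fun_prop
        exact hfm.comp this.measurable) A.continuous.measurable]
      simp
    rw [h1, hmap, lintegral_smul_measure, lintegral_prod _ (by
        have : Continuous (fun z => x0 + A.symm z) := by fun_prop
        exact (hfm.comp this.measurable).aemeasurable)]
    rfl
  have hf0 : ∀ t y, t ∉ Set.Ioc (0:ℝ) 1 → f (x0 + A.symm (t, y)) = 0 := by
    intro t y ht
    apply Set.indicator_of_notMem
    rintro ⟨h1, h2, -⟩
    rw [hlx, (hAs t y).1] at h1 h2
    exact ht ⟨h1, h2⟩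
  have s2 : ∫⁻ t : ℝ, ∫⁻ y : J → ℝ, f (x0 + A.symm (t, y)) ≤
      ∫⁻ t in Set.Ioc (0:ℝ) 1, ∫⁻ y : J → ℝ, f (x0 + t • A.symm (1, y)) := by
    rw [← lintegral_indicator measurableSet_Ioc]
    apply lintegral_mono
    intro t
    by_cases ht : t ∈ Set.Ioc (0:ℝ) 1
    · rw [Set.indicator_of_mem ht]
      simp only [← hscale]
      have hm : Measurable (fun y : J → ℝ => f (x0 + A.symm (t, y))) := by
        have : Continuous (fun y : J → ℝ => x0 + A.symm (t, y)) := by fun_prop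
        exact hfm.comp this.measurable
      have h2 : ∫⁻ y : J → ℝ, f (x0 + A.symm (t, t • y)) =
          ∫⁻ y, f (x0 + A.symm (t, y)) ∂(Measure.map (fun y => t • y) volume) := by
        rw [lintegral_map hm (measurable_const_smul t)]
      rw [h2, Measure.map_addHaar_smul _ ht.1.ne', lintegral_smul_measure]
      have hge : 1 ≤ ENNReal.ofReal |(t ^ Module.finrank ℝ (J → ℝ))⁻¹| := by
        have ht0 := ht.1
        rw [ENNReal.one_le_ofReal, abs_of_pos (by positivity)]
        exact (one_le_inv₀ (by positivity)).2 (pow_le_one₀ ht.1.le ht.2)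
      simp only [smul_eq_mul]
      exact le_mul_of_one_le_left (by positivity) hge
    · rw [Set.indicator_of_notMem ht]
      simp [hf0 _ _ ht]
  have hjoint : Measurable (fun p : (ι → ℝ) × ℝ => g ((1 - p.2) • x0 + p.2 • p.1)) := by
    have : Continuous (fun p : (ι → ℝ) × ℝ => (1 - p.2) • x0 + p.2 • p.1) := by fun_prop
    exact hg.comp this.measurable
  have hΦm : Measurable (fun b => ∫⁻ t in Set.Ioc (0:ℝ) 1, g ((1 - t) • x0 + t • b)) :=
    hjoint.lintegral_prod_right'
  have hcomb : ∀ (t : ℝ) y, x0 + t • A.symm (1, y) = (1 - t) • x0 + t • ψ y := by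
    intro t y
    rw [hψ]; simp only [smul_add, sub_smul, one_smul]; abel
  have s3 : ∫⁻ t in Set.Ioc (0:ℝ) 1, ∫⁻ y : J → ℝ, f (x0 + t • A.symm (1, y)) ≤
      ∫⁻ y : J → ℝ, F.indicator (fun b => ∫⁻ t in Set.Ioc (0:ℝ) 1, g ((1 - t) • x0 + t • b)) (ψ y)
      := by
    rw [lintegral_lintegral_swap (by
      have : Continuous (fun p : ℝ × (J → ℝ) => x0 + p.1 • A.symm (1, p.2)) := by fun_prop
      exact (hfm.comp this.measurable).aemeasurable)]
    apply lintegral_mono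
    intro y
    beta_reduce
    by_cases hy : ψ y ∈ F
    · rw [Set.indicator_of_mem hy]
      apply lintegral_mono
      intro t
      simp only
      rw [← hcomb]
      exact Set.indicator_le_self _ _ _
    · rw [Set.indicator_of_notMem hy, nonpos_iff_eq_zero]
      apply setLIntegral_eq_zero measurableSet_Ioc
      intro t ht
      apply Set.indicator_of_notMem
      rintro ⟨-, -, h3⟩
      apply hy
      rw [hlx, map_smul, (hAs 1 y).1, smul_eq_mul, mul_one, add_sub_cancel_left, smul_smul,
        inv_mul_cancel₀ ht.1.ne', one_smul] at h3
      exact h3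
  have hle : Measure.map ψ volume ≤
      (Measure.hausdorffMeasure (Fintype.card J : ℝ) : Measure (ι → ℝ)) := by
    rw [Measure.le_iff]
    intro E hE
    rw [Measure.map_apply hψm hE]
    have hsub : ψ ⁻¹' E ⊆ (fun y => r x0 + y) ⁻¹' (r '' E) := by
      intro y hy
      refine ⟨ψ y, hy, ?_⟩
      rw [hψ]; simp only [map_add, (hAs 1 y).2]
    calc volume (ψ ⁻¹' E) ≤ volume ((fun y => r x0 + y) ⁻¹' (r '' E)) := measure_mono hsub
      _ = volume (r '' E) := measure_preimage_add _ _ _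
      _ = Measure.hausdorffMeasure (Fintype.card J : ℝ) (r '' E) := by
          rw [hausdorffMeasure_pi_real]
      _ ≤ _ := by
          have := hr.hausdorffMeasure_image_le (d := (Fintype.card J : ℝ)) (by positivity) E
          simpa using this
  have s4 : ∫⁻ y : J → ℝ,
      F.indicator (fun b => ∫⁻ t in Set.Ioc (0:ℝ) 1, g ((1 - t) • x0 + t • b)) (ψ y) ≤
      ∫⁻ b in F, (∫⁻ t in Set.Ioc (0:ℝ) 1, g ((1 - t) • x0 + t • b))
        ∂(Measure.hausdorffMeasure (Fintype.card J : ℝ)) := by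
    rw [← lintegral_map (hΦm.indicator hFm) hψm, ← lintegral_indicator hFm]
    exact lintegral_mono' hle le_rfl
  rw [s1]
  gcongr
  exact s2.trans (s3.trans s4)

end

section

lemma sys_compact (S : SystemOn ι) : IsCompact S.P := S.simple.1.1

lemma sys_meas (S : SystemOn ι) : MeasurableSet S.P := (sys_compact S).measurableSet

lemma sys_convex (S : SystemOn ι) : Convex ℝ S.P := by
  obtain ⟨m, K, L, hP, -⟩ := polytope_rep S.simple.1
  rw [hP]
  intro x hx y hy a b ha hb hab k hk
  obtain rfl : a = 1 - b := by linarith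
  rw [aff_comb]
  exact add_nonneg (mul_nonneg ha (hx k hk)) (mul_nonneg hb (hy k hk))

lemma sys_vol (S : SystemOn ι) : volume S.P ≠ 0 := by
  intro h
  have := measure_mono_null interior_subset h
  exact (isOpen_interior.measure_pos volume S.simple.1.2.1).ne' this

lemma mu_pos (S : SystemOn ι) : S.μ S.P ≠ 0 := by
  obtain ⟨c, hc, h⟩ := S.flat
  rw [h]
  simp [hc, sys_vol S]

lemma mu_fin (S : SystemOn ι) : S.μ S.P ≠ ⊤ := by
  obtain ⟨c, hc, h⟩ := S.flat
  rw [h]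
  simp only [Measure.smul_apply, Measure.restrict_apply_self, smul_eq_mul]
  exact ENNReal.mul_ne_top ENNReal.ofReal_ne_top (sys_compact S).measure_lt_top.ne

lemma mu_res (S : SystemOn ι) : S.μ.restrict S.P = S.μ := by
  obtain ⟨c, hc, h⟩ := S.flat
  rw [h, Measure.restrict_smul, Measure.restrict_restrict (sys_meas S), Set.inter_self]

lemma mu_ac (S : SystemOn ι) : volume.restrict S.P ≪ S.μ := by
  obtain ⟨c, hc, h⟩ := S.flat
  rw [h]
  exact Measure.absolutelyContinuous_smul (by simpa using hc)

lemma sig_fin (S : SystemOn ι) : S.σ Set.univ < ⊤ := by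
  obtain ⟨m, K, L, hP, hint, hlin, hfac⟩ := polytope_rep S.simple.1
  have hsub : Set.univ ⊆ (frontier S.P)ᶜ ∪ ⋃ k ∈ K, {x ∈ S.P | L k x = 0} := by
    intro x _
    by_cases hx : x ∈ frontier S.P
    · right
      obtain ⟨k, hk, hxk⟩ := frontier_cover (sys_compact S).isClosed K L hP hx
      exact Set.mem_biUnion hk hxk
    · exact Or.inl hx
  refine (measure_mono hsub).trans_lt ((measure_union_le _ _).trans_lt ?_)
  rw [S.bdry_supp, zero_add]
  refine (measure_biUnion_finset_le _ _).trans_lt ?_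
  apply ENNReal.sum_lt_top.2
  intro k hk
  obtain ⟨c, hc, h⟩ := S.flat_bdry _ (hfac k hk)
  have := congrArg (fun ν => ν {x ∈ S.P | L k x = 0}) h
  simp only [Measure.smul_apply, Measure.restrict_apply_self, smul_eq_mul] at this
  rw [this]
  exact ENNReal.mul_lt_top ENNReal.ofReal_lt_top (facet_fin (L k) (hlin k hk) (sys_compact S))

def nuM (S : SystemOn ι) : Measure (ι → ℝ) := (S.μ S.P)⁻¹ • S.μ

def tauM (S : SystemOn ι) : Measure (ι → ℝ) := (S.μ S.P)⁻¹ • S.σ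

instance nu_prob (S : SystemOn ι) : IsProbabilityMeasure (nuM S) := by
  constructor
  have h : S.μ Set.univ = S.μ S.P := by
    rw [← Measure.restrict_apply_univ S.P, mu_res]
  simp only [nuM, Measure.smul_apply, smul_eq_mul, h]
  exact ENNReal.inv_mul_cancel (mu_pos S) (mu_fin S)

instance tau_fin (S : SystemOn ι) : IsFiniteMeasure (tauM S) := by
  constructor
  simp only [tauM, Measure.smul_apply, smul_eq_mul]
  exact ENNReal.mul_lt_top (ENNReal.inv_lt_top.2 (pos_iff_ne_zero.2 (mu_pos S))) (sig_fin S)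

instance mu_finm (S : SystemOn ι) : IsFiniteMeasure S.μ := by
  constructor
  rw [← mu_res, Measure.restrict_apply_univ]
  exact (mu_fin S).lt_top

instance sig_finm (S : SystemOn ι) : IsFiniteMeasure S.σ := ⟨sig_fin S⟩

lemma nu_ae_mem (S : SystemOn ι) : ∀ᵐ x ∂(nuM S), x ∈ S.P := by
  apply Measure.ae_smul_measure
  rw [← mu_res]
  exact ae_restrict_mem (sys_meas S)

lemma tau_ae_mem (S : SystemOn ι) : ∀ᵐ x ∂(tauM S), x ∈ S.P := by
  apply Measure.ae_smul_measure
  have : ∀ᵐ x ∂S.σ, x ∈ frontier S.P := S.bdry_supp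
  filter_upwards [this] with x hx
  exact (sys_compact S).isClosed.frontier_subset hx

lemma nu_ac (S : SystemOn ι) : volume.restrict S.P ≪ nuM S :=
  (mu_ac S).trans (Measure.absolutelyContinuous_smul (ENNReal.inv_ne_zero.2 (mu_fin S)))

lemma nu_lint (S : SystemOn ι) (u : (ι → ℝ) → ℝ≥0∞) :
    ∫⁻ x, S.P.indicator u x ∂(nuM S) = (S.μ S.P)⁻¹ * ∫⁻ x in S.P, u x ∂S.μ := by
  rw [nuM, lintegral_smul_measure, lintegral_indicator (sys_meas S)]; rfl

lemma up_eq (S : SystemOn ι) (u : (ι → ℝ) → ℝ≥0∞) :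
    Upf S u = ∫⁻ x, S.P.indicator u x ∂(tauM S) := by
  rw [tauM, lintegral_smul_measure, lintegral_indicator (sys_meas S), Upf, smul_eq_mul]
  congr 1
  have h1 : S.σ.restrict (frontier S.P) = S.σ := by
    rw [Measure.restrict_eq_self_of_ae_mem]
    exact S.bdry_supp
  have h2 : S.σ.restrict S.P = S.σ := by
    rw [Measure.restrict_eq_self_of_ae_mem]
    have : ∀ᵐ x ∂S.σ, x ∈ frontier S.P := S.bdry_supp
    filter_upwards [this] with x hx
    exact (sys_compact S).isClosed.frontier_subset hx
  rw [h1, h2]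

lemma mexp_iff (S : SystemOn ι) (u : (ι → ℝ) → ℝ≥0∞) :
    u ∈ MExp S 1 ↔ LowerSemicontinuousOn u S.P ∧ (∀ x ∈ S.P, 0 < u x) ∧ LogConvexOn S.P u ∧
      ∫⁻ x, S.P.indicator u x ∂(nuM S) = 1 := by
  have key : ∫⁻ x, S.P.indicator u x ∂(nuM S) = 1 ↔ (∫⁻ x in S.P, u x ∂S.μ) = S.μ S.P := by
    rw [nu_lint]
    constructor
    · intro h
      have h2 := congrArg (fun a => S.μ S.P * a) h
      simp only [mul_one] at h2
      rwa [← mul_assoc, ENNReal.mul_inv_cancel (mu_pos S) (mu_fin S), one_mul] at h2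
    · intro h
      rw [h, ENNReal.inv_mul_cancel (mu_pos S) (mu_fin S)]
  rw [key]
  simp only [MExp, Set.mem_ofPred_eq, ENNReal.rpow_one]
  constructor
  · rintro ⟨a, b, c, d, e⟩; exact ⟨a, b, c, d⟩
  · rintro ⟨a, b, c, d⟩; exact ⟨a, b, c, d, by rw [d]; exact (mu_fin S).lt_top⟩

lemma one_mem (S : SystemOn ι) : (fun _ => 1) ∈ MExp S 1 := by
  simp only [MExp, Set.mem_ofPred_eq]
  refine ⟨lowerSemicontinuousOn_const, by simp, ?_, by simp, by simpa using (mu_fin S).lt_top⟩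
  intro x hx y hy t h0 h1
  simp

lemma xlogx_meas : Measurable xlogx := by
  unfold xlogx
  exact (ENNReal.measurable_toReal).mul (Real.measurable_log.comp ENNReal.measurable_toReal)

lemma xlogx_lower (y : ℝ≥0∞) : -1 ≤ xlogx y := by
  have h := xl_lower y.toReal ENNReal.toReal_nonneg
  have h2 : 0 ≤ y.toReal := ENNReal.toReal_nonneg
  unfold xlogx
  linarith

end

section

lemma spf_eq (S : SystemOn ι) (u : (ι → ℝ) → ℝ≥0∞) (hu : LowerSemicontinuousOn u S.P) :
    (Integrable (fun x => xlogx (S.P.indicator u x)) (nuM S) →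
      Spf S u = ((-∫ x, xlogx (S.P.indicator u x) ∂(nuM S) : ℝ) : EReal)) ∧
    (¬ Integrable (fun x => xlogx (S.P.indicator u x)) (nuM S) → Spf S u = ⊥) ∧
    (Integrable (fun x => xlogx (S.P.indicator u x)) (nuM S) ↔
      ∫⁻ x in S.P, ENNReal.ofReal (xlogx (u x)) ∂S.μ < ⊤) := by
  have hm : Measurable (fun x => xlogx (S.P.indicator u x)) :=
    xlogx_meas.comp (lsc_meas (sys_meas S) hu)
  have hz : xlogx 0 = 0 := by simp [xlogx]
  set m := S.μ S.P with hmdef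
  have hm0 := mu_pos S
  have hmt := mu_fin S
  rw [← hmdef] at hm0 hmt
  set a := ∫⁻ x in S.P, ENNReal.ofReal (-(xlogx (u x))) ∂S.μ with ha
  set b := ∫⁻ x in S.P, ENNReal.ofReal (xlogx (u x)) ∂S.μ with hb
  have hb' : ∫⁻ x, ENNReal.ofReal (xlogx (S.P.indicator u x)) ∂(nuM S) = m⁻¹ * b := by
    rw [hb, ← nu_lint]
    congr 1; ext x
    by_cases hx : x ∈ S.P <;> simp [hx, hz]
  have ha' : ∫⁻ x, ENNReal.ofReal (-xlogx (S.P.indicator u x)) ∂(nuM S) = m⁻¹ * a := by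
    rw [ha, ← nu_lint]
    congr 1; ext x
    by_cases hx : x ∈ S.P <;> simp [hx, hz]
  have hat : a ≠ ⊤ := by
    refine ((lintegral_mono (g := fun _ => 1) ?_).trans_lt ?_).ne
    · intro x
      have := xlogx_lower (u x)
      simp only [ENNReal.ofReal_le_one]
      linarith
    · simpa using hmt.lt_top
  have hmi : m⁻¹ ≠ ⊤ := ENNReal.inv_ne_top.2 hm0
  have hmi0 : m⁻¹ ≠ 0 := ENNReal.inv_ne_zero.2 hmt
  have hmr : 0 < m.toReal := ENNReal.toReal_pos hm0 hmt
  have hiff : Integrable (fun x => xlogx (S.P.indicator u x)) (nuM S) ↔ b < ⊤ := by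
    constructor
    · intro h
      have h1 : ∫⁻ x, ENNReal.ofReal (xlogx (S.P.indicator u x)) ∂(nuM S) < ⊤ :=
        (lintegral_mono (fun x => Real.ofReal_le_enorm _)).trans_lt h.2
      rw [hb'] at h1
      by_contra hcon
      rw [not_lt_top_iff] at hcon
      rw [hcon, ENNReal.mul_top hmi0] at h1
      exact lt_irrefl _ h1
    · intro h
      refine ⟨hm.aestronglyMeasurable, ?_⟩
      have h3 : ∀ x : ℝ, ‖x‖ₑ ≤ ENNReal.ofReal x + ENNReal.ofReal (-x) := by
        intro x
        rw [Real.enorm_eq_ofReal_abs]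
        rcases le_total 0 x with hx | hx
        · rw [abs_of_nonneg hx]; exact le_self_add
        · rw [abs_of_nonpos hx]; exact le_add_self
      refine (lintegral_mono (fun x => h3 _)).trans_lt ?_
      rw [lintegral_add_left hm.ennreal_ofReal, ha', hb']
      exact ENNReal.add_lt_top.2 ⟨ENNReal.mul_lt_top hmi.lt_top h,
        ENNReal.mul_lt_top hmi.lt_top hat.lt_top⟩
  refine ⟨?_, ?_, hiff⟩
  · intro h
    have hbt := (hiff.1 h).ne
    rw [integral_eq_lintegral_pos_part_sub_lintegral_neg_part h, hb', ha', Spf, ← ha, ← hb,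
      ← hmdef]
    rw [← EReal.coe_ennreal_toReal hat, ← EReal.coe_ennreal_toReal hbt]
    rw [ENNReal.toReal_mul, ENNReal.toReal_mul, ENNReal.toReal_inv]
    norm_cast
    ring
  · intro h
    have hbt : b = ⊤ := by
      by_contra hcon
      exact h (hiff.2 (lt_top_iff_ne_top.2 hcon))
    rw [Spf, ← ha, ← hb, hbt, ← hmdef, EReal.coe_ennreal_top]
    rw [← EReal.coe_ennreal_toReal hat, EReal.sub_top]
    exact EReal.coe_mul_bot_of_pos (inv_pos.2 hmr)

lemma sp_one (S : SystemOn ι) : Spf S (fun _ => 1) = 0 := by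
  simp [Spf, xlogx]

lemma up_one (S : SystemOn ι) : Upf S (fun _ => 1) < ⊤ := by
  rw [up_eq]
  refine (lintegral_mono (g := fun _ => 1) ?_).trans_lt ?_
  · intro x
    exact Set.indicator_le_self' (by simp) x
  · simp

end

section

lemma bU_lt {κ : Type} (K : Finset κ) (s : κ → Set (ι → ℝ)) (g : (ι → ℝ) → ℝ≥0∞)
    (h : ∀ k ∈ K, ∫⁻ x in s k, g x < ⊤) : ∫⁻ x in ⋃ k ∈ K, s k, g x < ⊤ := by
  classical
  induction K using Finset.induction_on with
  | empty => simp
  | insert a K ha ih =>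
    rw [Finset.set_biUnion_insert]
    refine (lintegral_union_le _ _ _).trans_lt (ENNReal.add_lt_top.2 ⟨?_, ?_⟩)
    · exact h a (Finset.mem_insert_self _ _)
    · exact ih (fun k hk => h k (Finset.mem_insert_of_mem hk))

lemma cone_cover (S : SystemOn ι) {m : ℕ} (K : Finset (Fin m))
    (L : Fin m → ((ι → ℝ) →ᵃ[ℝ] ℝ)) (hP : S.P = {x | ∀ k ∈ K, 0 ≤ L k x}) (x0 : ι → ℝ)
    (hx0 : ∀ k ∈ K, 0 < L k x0) (x : ι → ℝ) (hx : x ∈ S.P) (hne : x ≠ x0) :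
    ∃ k ∈ K, 0 < 1 - L k x / L k x0 ∧ 1 - L k x / L k x0 ≤ 1 ∧
        x0 + (1 - L k x / L k x0)⁻¹ • (x - x0) ∈ {x ∈ S.P | L k x = 0} := by
  have hxk : ∀ k ∈ K, 0 ≤ L k x := by rw [hP] at hx; exact hx
  have hray : ∀ k ∈ K, ∀ s : ℝ, L k (x0 + s • (x - x0)) =
      L k x0 * (1 - s * (1 - L k x / L k x0)) := by
    intro k hk s
    have h1 := aff_add (L k) x0 (x - x0) s
    have h2 := aff_add (L k) x0 (x - x0) 1
    rw [one_smul, add_sub_cancel] at h2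
    have h3 := (hx0 k hk).ne'
    rw [h1]
    have : (L k).linear (x - x0) = L k x - L k x0 := by linarith
    rw [this]
    field_simp
    ring
  by_cases hpos : ∃ k ∈ K, 0 < 1 - L k x / L k x0
  · obtain ⟨k0, hk0, hp0⟩ := hpos
    obtain ⟨k, hk, hmax⟩ := K.exists_max_image (fun k => 1 - L k x / L k x0) ⟨k0, hk0⟩
    have hp : 0 < 1 - L k x / L k x0 := hp0.trans_le (hmax k0 hk0)
    refine ⟨k, hk, hp, ?_, ?_, ?_⟩
    · have := div_nonneg (hxk k hk) (hx0 k hk).le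
      linarith
    · rw [hP]
      intro j hj
      rw [hray j hj]
      apply mul_nonneg (hx0 j hj).le
      have h1 := hmax j hj
      have h2 : (1 - L k x / L k x0)⁻¹ * (1 - L j x / L j x0) ≤ 1 := by
        rw [inv_mul_le_iff₀ hp, mul_one]
        exact h1
      linarith
    · rw [hray k hk, inv_mul_cancel₀ hp.ne']
      simp
  · exfalso
    push Not at hpos
    have hin : ∀ s : ℝ, 0 ≤ s → x0 + s • (x - x0) ∈ S.P := by
      intro s hs
      rw [hP]
      intro k hk
      rw [hray k hk]
      apply mul_nonneg (hx0 k hk).le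
      have := mul_nonpos_of_nonneg_of_nonpos hs (hpos k hk)
      linarith
    obtain ⟨R, hR⟩ := (sys_compact S).isBounded.exists_norm_le
    have hd : 0 < ‖x - x0‖ := norm_pos_iff.2 (sub_ne_zero.2 hne)
    have hR0 : 0 ≤ R := (norm_nonneg _).trans (hR x hx)
    have h1 := hR _ (hin ((R + ‖x0‖ + 1) / ‖x - x0‖) (by positivity))
    have h2 : ‖((R + ‖x0‖ + 1) / ‖x - x0‖) • (x - x0)‖ = R + ‖x0‖ + 1 := by
      rw [norm_smul, Real.norm_of_nonneg (by positivity)]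
      field_simp
    have h3 := norm_sub_le (x0 + ((R + ‖x0‖ + 1) / ‖x - x0‖) • (x - x0)) x0
    rw [add_sub_cancel_left, h2] at h3
    linarith

lemma ent_fin (S : SystemOn ι) (u : (ι → ℝ) → ℝ≥0∞) (hu : u ∈ MExp S 1) (hU : Upf S u < ⊤) :
    Integrable (fun x => xlogx (S.P.indicator u x)) (nuM S) := by
  obtain ⟨hlsc, hpos, hlog, hint⟩ := (mexp_iff S u).1 hu
  rw [(spf_eq S u hlsc).2.2]
  set w := S.P.indicator u with hw
  have hwm : Measurable w := lsc_meas (sys_meas S) hlsc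
  have hwP : ∀ x ∈ S.P, w x = u x := fun x hx => Set.indicator_of_mem hx _
  set g := fun x => ENNReal.ofReal (xlogx (w x)) with hg
  have hgm : Measurable g := (xlogx_meas.comp hwm).ennreal_ofReal
  have hfin : ∀ᵐ x ∂(volume.restrict S.P), w x < ⊤ :=
    (nu_ac S).ae_le (ae_lt_top hwm (by rw [hint]; exact ENNReal.one_ne_top))
  obtain ⟨x0, hx0i, hx0f⟩ : ∃ x0 ∈ interior S.P, w x0 < ⊤ := by
    by_contra hcon
    push Not at hcon
    have h1 : (volume.restrict S.P) (interior S.P) = 0 := by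
      refine measure_mono_null ?_ hfin
      intro x hx
      exact fun h => (hcon x hx).not_gt h
    rw [Measure.restrict_apply isOpen_interior.measurableSet,
      Set.inter_eq_left.2 interior_subset] at h1
    exact (isOpen_interior.measure_pos volume S.simple.1.2.1).ne' h1
  have hx0P := interior_subset hx0i
  obtain ⟨m, K, L, hP, hintp, hlin, hfac⟩ := polytope_rep S.simple.1
  have hx0 : ∀ k ∈ K, 0 < L k x0 := fun k hk => hintp k hk x0 hx0i
  set c := max 1 (u x0).toReal with hc
  have hc1 : 1 ≤ c := le_max_left _ _
  have hcu : u x0 ≤ ENNReal.ofReal c := by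
    rw [hwP _ hx0P] at hx0f
    rw [← ENNReal.ofReal_toReal hx0f.ne]
    exact ENNReal.ofReal_le_ofReal (le_max_right _ _)
  have hsig : ∫⁻ x, w x ∂S.σ < ⊤ := by
    rw [up_eq, tauM, lintegral_smul_measure, smul_eq_mul] at hU
    by_contra hcon
    rw [not_lt_top_iff] at hcon
    rw [hcon, ENNReal.mul_top (ENNReal.inv_ne_zero.2 (mu_fin S))] at hU
    exact lt_irrefl _ hU
  have hD : ∀ k ∈ K, ∫⁻ x in {x | 0 < 1 - L k x / L k x0 ∧ 1 - L k x / L k x0 ≤ 1 ∧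
        x0 + (1 - L k x / L k x0)⁻¹ • (x - x0) ∈ {x ∈ S.P | L k x = 0}}, g x < ⊤ := by
    intro k hk
    obtain ⟨C, hC, hb⟩ := cone_bound (L k) (hlin k hk) (sys_compact S) x0 (hx0 k hk)
    refine (hb g hgm).trans_lt (ENNReal.mul_lt_top hC.lt_top ?_)
    have hFm : MeasurableSet {x ∈ S.P | L k x = 0} :=
      (sys_meas S).inter
        ((isClosed_singleton (x := (0:ℝ))).preimage (aff_cont (L k))).measurableSet
    refine (setLIntegral_mono' hFm (g := fun b =>
      ENNReal.ofReal (Real.log c + 1) * (w b + ENNReal.ofReal c)) ?_).trans_lt ?_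
    · intro b hb
      rw [setLIntegral_congr (Ioo_ae_eq_Ioc (μ := volume)).symm]
      apply oneD c hc1 (w b) (fun t => w ((1 - t) • x0 + t • b))
      intro t h0 h1
      rw [hwP b hb.1, hwP _ (sys_convex S hx0P hb.1 (by linarith) h0 (by ring))]
      refine (hlog hx0P hb.1 h0 h1).trans ?_
      gcongr
    · rw [lintegral_const_mul _ (hwm.add_const _)]
      apply ENNReal.mul_lt_top ENNReal.ofReal_lt_top
      rw [lintegral_add_right _ measurable_const]
      apply ENNReal.add_lt_top.2
      constructor
      · obtain ⟨d, hd, hσ⟩ := S.flat_bdry _ (hfac k hk)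
        have h1 : ∫⁻ x in {x ∈ S.P | L k x = 0}, w x ∂S.σ < ⊤ :=
          (setLIntegral_le_lintegral _ _).trans_lt hsig
        rw [hσ, lintegral_smul_measure, smul_eq_mul] at h1
        by_contra hcon
        rw [not_lt_top_iff] at hcon
        rw [hcon, ENNReal.mul_top (by simpa using hd)] at h1
        exact lt_irrefl _ h1
      · rw [lintegral_const, Measure.restrict_apply_univ]
        exact ENNReal.mul_lt_top ENNReal.ofReal_lt_top
          (facet_fin (L k) (hlin k hk) (sys_compact S))
  have hvol : ∫⁻ x in S.P, g x < ⊤ := by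
    have hsub : S.P ⊆ {x0} ∪ ⋃ k ∈ K, {x | 0 < 1 - L k x / L k x0 ∧ 1 - L k x / L k x0 ≤ 1 ∧
        x0 + (1 - L k x / L k x0)⁻¹ • (x - x0) ∈ {x ∈ S.P | L k x = 0}} := by
      intro x hx
      by_cases hxx : x = x0
      · exact Or.inl hxx
      · right
        obtain ⟨k, hk, h⟩ := cone_cover S K L hP x0 hx0 x hx hxx
        exact Set.mem_biUnion hk h
    refine (lintegral_mono_set hsub).trans_lt ((lintegral_union_le _ _ _).trans_lt ?_)
    apply ENNReal.add_lt_top.2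
    constructor
    · rw [lintegral_singleton]
      exact ENNReal.mul_lt_top ENNReal.ofReal_lt_top isCompact_singleton.measure_lt_top
    · exact bU_lt K _ g hD
  obtain ⟨d, hd, hμ⟩ := S.flat
  have : ∫⁻ x in S.P, ENNReal.ofReal (xlogx (u x)) ∂S.μ = ∫⁻ x in S.P, g x ∂S.μ := by
    apply setLIntegral_congr_fun (sys_meas S)
    intro x hx
    simp only [hg, hwP x hx]
  rw [this, mu_res, hμ, lintegral_smul_measure, smul_eq_mul]
  exact ENNReal.mul_lt_top ENNReal.ofReal_lt_top hvol

end

section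

variable {ι₁ ι₂ : Type} [Fintype ι₁] [Fintype ι₂]

structure IsComp (S₁ : SystemOn ι₁) (S₂ : SystemOn ι₂) (S : SystemOn (ι₁ ⊕ ι₂)) : Prop where
  hP : S.P = {x | (fun i => x (Sum.inl i)) ∈ S₁.P ∧ (fun i => x (Sum.inr i)) ∈ S₂.P}
  hμ : S.μ = (S₁.μ.prod S₂.μ).map (joinMap ι₁ ι₂)
  hσ : S.σ = (S₁.σ.prod S₂.μ).map (joinMap ι₁ ι₂)
        + (S₁.μ.prod S₂.σ).map (joinMap ι₁ ι₂)

lemma join_cont : Continuous (joinMap ι₁ ι₂) := by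
  apply continuous_pi
  rintro (i | i)
  · exact (continuous_apply i).comp continuous_fst
  · exact (continuous_apply i).comp continuous_snd

lemma join_meas : Measurable (joinMap ι₁ ι₂) := join_cont.measurable

lemma join_comb (x y : ι₁ → ℝ) (x' y' : ι₂ → ℝ) (s t : ℝ) :
    joinMap ι₁ ι₂ (s • x + t • y, s • x' + t • y') =
      s • joinMap ι₁ ι₂ (x, x') + t • joinMap ι₁ ι₂ (y, y') := by
  ext (i | i) <;> rfl

variable {S₁ : SystemOn ι₁} {S₂ : SystemOn ι₂} {S : SystemOn (ι₁ ⊕ ι₂)}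

lemma join_mem (h : IsComp S₁ S₂ S) (x : ι₁ → ℝ) (y : ι₂ → ℝ) :
    joinMap ι₁ ι₂ (x, y) ∈ S.P ↔ x ∈ S₁.P ∧ y ∈ S₂.P := by
  rw [h.hP]; rfl

lemma comp_mass (h : IsComp S₁ S₂ S) : S.μ S.P = S₁.μ S₁.P * S₂.μ S₂.P := by
  rw [← Measure.prod_prod, h.hμ, Measure.map_apply join_meas (sys_meas S)]
  congr 1
  ext ⟨x, y⟩
  exact join_mem h x y

lemma inv_mul_comp (h : IsComp S₁ S₂ S) :
    (S.μ S.P)⁻¹ = (S₁.μ S₁.P)⁻¹ * (S₂.μ S₂.P)⁻¹ := by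
  rw [comp_mass h, ENNReal.mul_inv (Or.inl (mu_pos S₁)) (Or.inl (mu_fin S₁))]

lemma nu_comp (h : IsComp S₁ S₂ S) {f : (ι₁ ⊕ ι₂ → ℝ) → ℝ≥0∞} (hf : Measurable f) :
    ∫⁻ x, f x ∂(nuM S) = ∫⁻ z, f (joinMap ι₁ ι₂ z) ∂((nuM S₁).prod (nuM S₂)) := by
  rw [nuM, nuM, nuM, Measure.prod_smul_left, Measure.prod_smul_right, lintegral_smul_measure,
    lintegral_smul_measure, lintegral_smul_measure, inv_mul_comp h, h.hμ,
    lintegral_map hf join_meas]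
  simp only [smul_eq_mul, mul_assoc]

lemma nu_comp_map (h : IsComp S₁ S₂ S) :
    nuM S = ((nuM S₁).prod (nuM S₂)).map (joinMap ι₁ ι₂) := by
  ext s hs
  rw [Measure.map_apply join_meas hs, ← lintegral_indicator_one hs, nu_comp h
    (measurable_one.indicator hs), ← lintegral_indicator_one (join_meas hs)]
  rfl

lemma tau_comp (h : IsComp S₁ S₂ S) {f : (ι₁ ⊕ ι₂ → ℝ) → ℝ≥0∞} (hf : Measurable f) :
    ∫⁻ x, f x ∂(tauM S) = ∫⁻ z, f (joinMap ι₁ ι₂ z) ∂((tauM S₁).prod (nuM S₂)) +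
      ∫⁻ z, f (joinMap ι₁ ι₂ z) ∂((nuM S₁).prod (tauM S₂)) := by
  rw [nuM, nuM, tauM, tauM, tauM, Measure.prod_smul_left, Measure.prod_smul_right,
    Measure.prod_smul_left, Measure.prod_smul_right, lintegral_smul_measure,
    lintegral_smul_measure, lintegral_smul_measure, lintegral_smul_measure, lintegral_smul_measure,
    inv_mul_comp h, h.hσ, lintegral_add_measure,
    lintegral_map hf join_meas, lintegral_map hf join_meas]
  simp only [smul_eq_mul, mul_assoc, mul_add]

end

section

lemma marg_gen {Y : Type} [MeasurableSpace Y] (ν : Measure Y) [IsProbabilityMeasure ν]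
    {κ : Type} [Fintype κ] (S' : SystemOn κ) (S : SystemOn ι) (Q : Set Y) (hQ : ∀ᵐ y ∂ν, y ∈ Q)
    (J : (κ → ℝ) → Y → (ι → ℝ)) (hJm : ∀ x, Measurable (J x))
    (hJc : ∀ y, Continuous (fun x => J x y))
    (hJa : ∀ x x' y (t : ℝ), J ((1 - t) • x + t • x') y = (1 - t) • J x y + t • J x' y)
    (hmem : ∀ x y, J x y ∈ S.P ↔ x ∈ S'.P ∧ y ∈ Q)
    (u : (ι → ℝ) → ℝ≥0∞) (hu : u ∈ MExp S 1)
    (hint : ∫⁻ x, ∫⁻ y, S.P.indicator u (J x y) ∂ν ∂(nuM S') = 1) :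
    (fun x => ∫⁻ y, S.P.indicator u (J x y) ∂ν) ∈ MExp S' 1 ∧
    S'.P.indicator (fun x => ∫⁻ y, S.P.indicator u (J x y) ∂ν) =
      (fun x => ∫⁻ y, S.P.indicator u (J x y) ∂ν) := by
  obtain ⟨hlsc, hpos, hlog, -⟩ := (mexp_iff S u).1 hu
  have hwm := lsc_meas (sys_meas S) hlsc
  set w := S.P.indicator u with hw
  have hwP : ∀ x ∈ S.P, w x = u x := fun x hx => Set.indicator_of_mem hx _
  have hind : S'.P.indicator (fun x => ∫⁻ y, w (J x y) ∂ν) = (fun x => ∫⁻ y, w (J x y) ∂ν) := by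
    rw [Set.indicator_eq_self]
    intro x hx
    by_contra hcon
    apply hx
    have : ∀ y, w (J x y) = 0 := by
      intro y
      apply Set.indicator_of_notMem
      rw [hmem]; tauto
    simp [this]
  refine ⟨?_, hind⟩
  rw [mexp_iff]
  refine ⟨?_, ?_, ?_, ?_⟩
  · rw [lowerSemicontinuousOn_iff_le_liminf] at hlsc ⊢
    intro x hx
    refine le_trans ?_ (lintegral_liminf_le (fun x' => hwm.comp (hJm x')))
    apply lintegral_mono_ae
    filter_upwards [hQ] with y hy
    have hJ : J x y ∈ S.P := (hmem x y).2 ⟨hx, hy⟩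
    rw [hwP _ hJ]
    refine (hlsc _ hJ).trans ?_
    have ht : Tendsto (fun x' => J x' y) (𝓝[S'.P] x) (𝓝[S.P] (J x y)) := by
      apply tendsto_nhdsWithin_of_tendsto_nhds_of_eventually_within
      · exact ((hJc y).tendsto x).mono_left nhdsWithin_le_nhds
      · filter_upwards [self_mem_nhdsWithin] with x' hx'
        exact (hmem x' y).2 ⟨hx', hy⟩
    have h1 : liminf u (𝓝[S.P] (J x y)) = liminf w (𝓝[S.P] (J x y)) := by
      apply liminf_congr
      filter_upwards [self_mem_nhdsWithin] with z hz
      exact (hwP z hz).symm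
    rw [h1]
    exact liminf_le_liminf_of_le ht
  · intro x hx
    rw [pos_iff_ne_zero]
    intro h0
    have h0 := (lintegral_eq_zero_iff (hwm.comp (hJm x))).1 h0
    obtain ⟨y, hy, hy0⟩ := (hQ.and h0).exists
    have hJ : J x y ∈ S.P := (hmem x y).2 ⟨hx, hy⟩
    simp only [Function.comp, Pi.zero_apply, hwP _ hJ] at hy0
    exact (hpos _ hJ).ne' hy0
  · intro x hx x' hx' t h0 h1
    refine le_trans ?_ (ENNReal.lintegral_mul_norm_pow_le (hwm.comp (hJm x)).aemeasurable
      (hwm.comp (hJm x')).aemeasurable (by linarith) h0 (by ring))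
    apply lintegral_mono_ae
    filter_upwards [hQ] with y hy
    have hJ : J x y ∈ S.P := (hmem x y).2 ⟨hx, hy⟩
    have hJ' : J x' y ∈ S.P := (hmem x' y).2 ⟨hx', hy⟩
    simp only [Function.comp]
    rw [hJa, hwP _ hJ, hwP _ hJ', hwP _ (sys_convex S hJ hJ' (by linarith) h0 (by ring))]
    exact hlog hJ hJ' h0 h1
  · rw [hind]; exact hint

variable {ι₁ ι₂ : Type} [Fintype ι₁] [Fintype ι₂]
variable {S₁ : SystemOn ι₁} {S₂ : SystemOn ι₂} {S : SystemOn (ι₁ ⊕ ι₂)}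

def mar1 (S₂ : SystemOn ι₂) (S : SystemOn (ι₁ ⊕ ι₂)) (u : (ι₁ ⊕ ι₂ → ℝ) → ℝ≥0∞) :
    (ι₁ → ℝ) → ℝ≥0∞ :=
  fun x => ∫⁻ y, S.P.indicator u (joinMap ι₁ ι₂ (x, y)) ∂(nuM S₂)

def mar2 (S₁ : SystemOn ι₁) (S : SystemOn (ι₁ ⊕ ι₂)) (u : (ι₁ ⊕ ι₂ → ℝ) → ℝ≥0∞) :
    (ι₂ → ℝ) → ℝ≥0∞ :=
  fun y => ∫⁻ x, S.P.indicator u (joinMap ι₁ ι₂ (x, y)) ∂(nuM S₁)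

lemma mar1_mem (h : IsComp S₁ S₂ S) (u : (ι₁ ⊕ ι₂ → ℝ) → ℝ≥0∞) (hu : u ∈ MExp S 1) :
    mar1 S₂ S u ∈ MExp S₁ 1 ∧ S₁.P.indicator (mar1 S₂ S u) = mar1 S₂ S u := by
  obtain ⟨hlsc, -, -, hi⟩ := (mexp_iff S u).1 hu
  have hwm := lsc_meas (sys_meas S) hlsc
  refine marg_gen (nuM S₂) S₁ S S₂.P (nu_ae_mem S₂) (fun x y => joinMap ι₁ ι₂ (x, y)) ?_ ?_ ?_ ?_
    u hu ?_
  · intro x; exact join_meas.comp (by fun_prop)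
  · intro y; exact join_cont.comp (by fun_prop)
  · intro x x' y t
    rw [← join_comb, ← add_smul]; simp
  · intro x y; exact join_mem h x y
  · rw [← hi, nu_comp h hwm]
    exact (lintegral_prod _ (hwm.comp join_meas).aemeasurable).symm

lemma mar2_mem (h : IsComp S₁ S₂ S) (u : (ι₁ ⊕ ι₂ → ℝ) → ℝ≥0∞) (hu : u ∈ MExp S 1) :
    mar2 S₁ S u ∈ MExp S₂ 1 ∧ S₂.P.indicator (mar2 S₁ S u) = mar2 S₁ S u := by
  obtain ⟨hlsc, -, -, hi⟩ := (mexp_iff S u).1 hu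
  have hwm := lsc_meas (sys_meas S) hlsc
  refine marg_gen (nuM S₁) S₂ S S₁.P (nu_ae_mem S₁) (fun y x => joinMap ι₁ ι₂ (x, y)) ?_ ?_ ?_ ?_
    u hu ?_
  · intro x; exact join_meas.comp (by fun_prop)
  · intro y; exact join_cont.comp (by fun_prop)
  · intro x x' y t
    rw [← join_comb, ← add_smul]; simp
  · intro x y; rw [join_mem h]; tauto
  · rw [← hi, nu_comp h hwm]
    exact (lintegral_prod_symm _ (hwm.comp join_meas).aemeasurable).symm

lemma up_mar (h : IsComp S₁ S₂ S) (u : (ι₁ ⊕ ι₂ → ℝ) → ℝ≥0∞) (hu : u ∈ MExp S 1) :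
    Upf S u = Upf S₁ (mar1 S₂ S u) + Upf S₂ (mar2 S₁ S u) := by
  obtain ⟨hlsc, -, -, hi⟩ := (mexp_iff S u).1 hu
  have hwm := lsc_meas (sys_meas S) hlsc
  rw [up_eq, up_eq, up_eq, (mar1_mem h u hu).2, (mar2_mem h u hu).2, tau_comp h hwm]
  congr 1
  · exact lintegral_prod _ (hwm.comp join_meas).aemeasurable
  · exact lintegral_prod_symm _ (hwm.comp join_meas).aemeasurable

def prodF (u₁ : (ι₁ → ℝ) → ℝ≥0∞) (u₂ : (ι₂ → ℝ) → ℝ≥0∞) : (ι₁ ⊕ ι₂ → ℝ) → ℝ≥0∞ :=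
  fun x => u₁ (fun i => x (Sum.inl i)) * u₂ (fun i => x (Sum.inr i))

lemma prod_ind (h : IsComp S₁ S₂ S) (u₁ : (ι₁ → ℝ) → ℝ≥0∞) (u₂ : (ι₂ → ℝ) → ℝ≥0∞)
    (z : (ι₁ → ℝ) × (ι₂ → ℝ)) :
    S.P.indicator (prodF u₁ u₂) (joinMap ι₁ ι₂ z) =
      S₁.P.indicator u₁ z.1 * S₂.P.indicator u₂ z.2 := by
  have hm := join_mem h z.1 z.2
  by_cases h1 : z.1 ∈ S₁.P
  · by_cases h2 : z.2 ∈ S₂.P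
    · rw [Set.indicator_of_mem h1, Set.indicator_of_mem h2, Set.indicator_of_mem (hm.2 ⟨h1, h2⟩)]
      rfl
    · rw [Set.indicator_of_notMem h2, Set.indicator_of_notMem (fun hh => h2 (hm.1 hh).2), mul_zero]
  · rw [Set.indicator_of_notMem h1, Set.indicator_of_notMem (fun hh => h1 (hm.1 hh).1), zero_mul]

lemma lsc_mul {X : Type} [TopologicalSpace X] {s : Set X} {f g : X → ℝ≥0∞}
    (hf : LowerSemicontinuousOn f s) (hg : LowerSemicontinuousOn g s) :
    LowerSemicontinuousOn (fun x => f x * g x) s := by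
  rw [lowerSemicontinuousOn_iff_le_liminf] at hf hg ⊢
  intro x hx
  exact (mul_le_mul' (hf x hx) (hg x hx)).trans ENNReal.le_liminf_mul

lemma lsc_comp {X Z : Type} [TopologicalSpace X] [TopologicalSpace Z] {s : Set X} {t : Set Z}
    {f : X → ℝ≥0∞} (hf : LowerSemicontinuousOn f s) {φ : Z → X} (hφ : Continuous φ)
    (hm : ∀ z ∈ t, φ z ∈ s) : LowerSemicontinuousOn (fun z => f (φ z)) t := by
  intro z hz y hy
  have ht : Tendsto φ (𝓝[t] z) (𝓝[s] (φ z)) := by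
    apply tendsto_nhdsWithin_of_tendsto_nhds_of_eventually_within
    · exact (hφ.tendsto z).mono_left nhdsWithin_le_nhds
    · filter_upwards [self_mem_nhdsWithin] with x' hx'
      exact hm _ hx'
  exact ht.eventually (hf (φ z) (hm z hz) y hy)

lemma prodF_mem (h : IsComp S₁ S₂ S) (u₁ : (ι₁ → ℝ) → ℝ≥0∞) (u₂ : (ι₂ → ℝ) → ℝ≥0∞)
    (h₁ : u₁ ∈ MExp S₁ 1) (h₂ : u₂ ∈ MExp S₂ 1) : prodF u₁ u₂ ∈ MExp S 1 := by
  obtain ⟨hl1, hp1, hc1, hi1⟩ := (mexp_iff S₁ u₁).1 h₁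
  obtain ⟨hl2, hp2, hc2, hi2⟩ := (mexp_iff S₂ u₂).1 h₂
  have hP : ∀ x ∈ S.P, (fun i => x (Sum.inl i)) ∈ S₁.P ∧ (fun i => x (Sum.inr i)) ∈ S₂.P := by
    intro x hx
    rw [h.hP] at hx
    exact hx
  have hlsc : LowerSemicontinuousOn (prodF u₁ u₂) S.P :=
    lsc_mul (lsc_comp hl1 (by fun_prop) (fun x hx => (hP x hx).1))
      (lsc_comp hl2 (by fun_prop) (fun x hx => (hP x hx).2))
  rw [mexp_iff]
  refine ⟨hlsc, ?_, ?_, ?_⟩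
  · intro x hx
    exact ENNReal.mul_pos (hp1 _ (hP x hx).1).ne' (hp2 _ (hP x hx).2).ne'
  · intro x hx y hy t h0 h1
    have e1 := hc1 (hP x hx).1 (hP y hy).1 h0 h1
    have e2 := hc2 (hP x hx).2 (hP y hy).2 h0 h1
    have h0' : 0 ≤ 1 - t := by linarith
    simp only [prodF]
    rw [ENNReal.mul_rpow_of_nonneg _ _ h0, ENNReal.mul_rpow_of_nonneg _ _ h0',
      mul_mul_mul_comm]
    exact mul_le_mul' e1 e2
  · rw [nu_comp h (lsc_meas (sys_meas S) hlsc)]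
    simp only [prod_ind h]
    rw [lintegral_prod_mul (lsc_meas (sys_meas S₁) hl1).aemeasurable
      (lsc_meas (sys_meas S₂) hl2).aemeasurable, hi1, hi2, one_mul]

lemma up_prod (h : IsComp S₁ S₂ S) (u₁ : (ι₁ → ℝ) → ℝ≥0∞) (u₂ : (ι₂ → ℝ) → ℝ≥0∞)
    (h₁ : u₁ ∈ MExp S₁ 1) (h₂ : u₂ ∈ MExp S₂ 1) :
    Upf S (prodF u₁ u₂) = Upf S₁ u₁ + Upf S₂ u₂ := by
  obtain ⟨hl1, hp1, hc1, hi1⟩ := (mexp_iff S₁ u₁).1 h₁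
  obtain ⟨hl2, hp2, hc2, hi2⟩ := (mexp_iff S₂ u₂).1 h₂
  obtain ⟨hl, -⟩ := (mexp_iff S _).1 (prodF_mem h u₁ u₂ h₁ h₂)
  rw [up_eq, tau_comp h (lsc_meas (sys_meas S) hl)]
  simp only [prod_ind h]
  rw [lintegral_prod_mul (lsc_meas (sys_meas S₁) hl1).aemeasurable
      (lsc_meas (sys_meas S₂) hl2).aemeasurable, lintegral_prod_mul
      (lsc_meas (sys_meas S₁) hl1).aemeasurable
      (lsc_meas (sys_meas S₂) hl2).aemeasurable, hi1, hi2, one_mul, mul_one, up_eq, up_eq]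

end

section

def EFin (S : SystemOn ι) (u : (ι → ℝ) → ℝ≥0∞) : Prop :=
  Integrable (fun x => xlogx (S.P.indicator u x)) (nuM S)

def Ent (S : SystemOn ι) (u : (ι → ℝ) → ℝ≥0∞) : ℝ :=
  ∫ x, xlogx (S.P.indicator u x) ∂(nuM S)

lemma sp_fin (S : SystemOn ι) {u : (ι → ℝ) → ℝ≥0∞} (hu : u ∈ MExp S 1) (h : EFin S u) :
    Spf S u = ((-Ent S u : ℝ) : EReal) := (spf_eq S u hu.1).1 h

lemma sp_bot (S : SystemOn ι) {u : (ι → ℝ) → ℝ≥0∞} (hu : u ∈ MExp S 1) (h : ¬ EFin S u) :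
    Spf S u = ⊥ := (spf_eq S u hu.1).2.1 h

lemma mexp_meas (S : SystemOn ι) {u : (ι → ℝ) → ℝ≥0∞} (hu : u ∈ MExp S 1) :
    Measurable (S.P.indicator u) := lsc_meas (sys_meas S) hu.1

lemma mexp_ae (S : SystemOn ι) {u : (ι → ℝ) → ℝ≥0∞} (hu : u ∈ MExp S 1) :
    ∀ᵐ x ∂(nuM S), S.P.indicator u x < ⊤ := by
  obtain ⟨hlsc, hpos, hlog, hint⟩ := (mexp_iff S u).1 hu
  exact ae_lt_top (mexp_meas S hu) (by rw [hint]; exact ENNReal.one_ne_top)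

lemma mexp_real (S : SystemOn ι) {u : (ι → ℝ) → ℝ≥0∞} (hu : u ∈ MExp S 1) :
    Integrable (fun x => (S.P.indicator u x).toReal) (nuM S) ∧
      ∫ x, (S.P.indicator u x).toReal ∂(nuM S) = 1 := by
  obtain ⟨hlsc, hpos, hlog, hint⟩ := (mexp_iff S u).1 hu
  constructor
  · exact integrable_toReal_of_lintegral_ne_top (mexp_meas S hu).aemeasurable
      (by rw [hint]; exact ENNReal.one_ne_top)
  · rw [integral_toReal (mexp_meas S hu).aemeasurable (mexp_ae S hu), hint]
    rfl

lemma mid_mem (S : SystemOn ι) {u w : (ι → ℝ) → ℝ≥0∞} (hu : u ∈ MExp S 1) (hw : w ∈ MExp S 1) :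
    (fun x => (u x + w x) / 2) ∈ MExp S 1 ∧
    Upf S (fun x => (u x + w x) / 2) = (Upf S u + Upf S w) / 2 := by
  obtain ⟨hlsc, hpos, hlog, hint⟩ := (mexp_iff S u).1 hu
  obtain ⟨hlsc', hpos', hlog', hint'⟩ := (mexp_iff S w).1 hw
  have hind : S.P.indicator (fun x => (u x + w x) / 2) =
      fun x => (S.P.indicator u x + S.P.indicator w x) * 2⁻¹ := by
    ext x
    by_cases hx : x ∈ S.P <;> simp [hx, div_eq_mul_inv]
  have hl : ∀ ν : Measure (ι → ℝ), ∫⁻ x, S.P.indicator (fun x => (u x + w x) / 2) x ∂ν =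
      (∫⁻ x, S.P.indicator u x ∂ν + ∫⁻ x, S.P.indicator w x ∂ν) / 2 := by
    intro ν
    have hs : Measurable (fun x => S.P.indicator u x + S.P.indicator w x) :=
      (mexp_meas S hu).add (mexp_meas S hw)
    simp only [hind]
    rw [lintegral_mul_const _ hs, lintegral_add_left (mexp_meas S hu), div_eq_mul_inv]
  constructor
  · rw [mexp_iff]
    refine ⟨lsc_mid hlsc hlsc', ?_, logc_mid hlog hlog', ?_⟩
    · intro x hx
      apply ENNReal.div_pos _ (by simp)
      exact ((hpos x hx).trans_le le_self_add).ne'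
    · rw [hl, hint, hint', one_add_one_eq_two]
      exact ENNReal.div_self (by simp) (by simp)
  · rw [up_eq, up_eq, up_eq, hl]

lemma mid_unique (S : SystemOn ι) {u w : (ι → ℝ) → ℝ≥0∞} (hu : u ∈ MExp S 1)
    (hw : w ∈ MExp S 1) (hue : EFin S u) (hwe : EFin S w) :
    EFin S (fun x => (u x + w x) / 2) ∧
    ((Ent S u + Ent S w) / 2 ≤ Ent S (fun x => (u x + w x) / 2) → Set.EqOn u w S.P) := by
  have hae : (fun x => xlogx (S.P.indicator (fun x => (u x + w x) / 2) x)) =ᵐ[nuM S]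
      fun z => (((S.P.indicator u z).toReal + (S.P.indicator w z).toReal) / 2) *
        Real.log (((S.P.indicator u z).toReal + (S.P.indicator w z).toReal) / 2) := by
    filter_upwards [mexp_ae S hu, mexp_ae S hw] with x hx hx'
    have : S.P.indicator (fun x => (u x + w x) / 2) x =
        (S.P.indicator u x + S.P.indicator w x) / 2 := by
      by_cases hx : x ∈ S.P <;> simp [hx]
    simp only [xlogx, this, ENNReal.toReal_div, ENNReal.toReal_add hx.ne hx'.ne,
      ENNReal.toReal_ofNat]
  obtain ⟨h1, h2⟩ := mid_ent (nuM S) (fun x => (S.P.indicator u x).toReal)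
    (fun x => (S.P.indicator w x).toReal) (fun _ => ENNReal.toReal_nonneg)
    (fun _ => ENNReal.toReal_nonneg) (mexp_real S hu).1 (mexp_real S hw).1 hue hwe
  refine ⟨h1.congr hae.symm, fun hle => ?_⟩
  have h3 := h2 (by
    have h4 := integral_congr_ae hae
    rw [← h4]
    exact hle)
  obtain ⟨hlsc, hpos, hlog, hint⟩ := (mexp_iff S u).1 hu
  obtain ⟨hlsc', hpos', hlog', hint'⟩ := (mexp_iff S w).1 hw
  have hm : ∀ᵐ x ∂(volume.restrict S.P), x ∈ S.P := ae_restrict_mem (sys_meas S)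
  have a1 := (nu_ac S).ae_le (mexp_ae S hu)
  have a2 := (nu_ac S).ae_le (mexp_ae S hw)
  have a3 := (nu_ac S).ae_le h3
  apply eqOn_of_ae (sys_convex S) (sys_meas S) (sys_vol S) hlsc hlsc' hlog hlog' hpos hpos'
  · filter_upwards [hm, a1] with x hx h
    rw [Set.indicator_of_mem hx] at h
    exact h.ne
  · filter_upwards [hm, a2] with x hx h
    rw [Set.indicator_of_mem hx] at h
    exact h.ne
  · filter_upwards [hm, a1, a2, a3] with x hx h h' h''
    simp only [Set.indicator_of_mem hx] at h h' h''
    exact (ENNReal.toReal_eq_toReal_iff' h.ne h'.ne).1 h''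

variable {ι₁ ι₂ : Type} [Fintype ι₁] [Fintype ι₂]
variable {S₁ : SystemOn ι₁} {S₂ : SystemOn ι₂} {S : SystemOn (ι₁ ⊕ ι₂)}

lemma sp_prod (h : IsComp S₁ S₂ S) {u₁ : (ι₁ → ℝ) → ℝ≥0∞} {u₂ : (ι₂ → ℝ) → ℝ≥0∞}
    (h₁ : u₁ ∈ MExp S₁ 1) (h₂ : u₂ ∈ MExp S₂ 1) (e₁ : EFin S₁ u₁) (e₂ : EFin S₂ u₂) :
    EFin S (prodF u₁ u₂) ∧ Ent S (prodF u₁ u₂) = Ent S₁ u₁ + Ent S₂ u₂ := by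
  obtain ⟨i1, j1⟩ := mexp_real S₁ h₁
  obtain ⟨i2, j2⟩ := mexp_real S₂ h₂
  obtain ⟨a, b⟩ := prod_ent (nuM S₁) (nuM S₂) _ _ i1 j1 i2 j2 e₁ e₂
  have hm : Measurable (fun x => xlogx (S.P.indicator (prodF u₁ u₂) x)) :=
    xlogx_meas.comp (mexp_meas S (prodF_mem h u₁ u₂ h₁ h₂))
  have heq : (fun z => xlogx (S.P.indicator (prodF u₁ u₂) (joinMap ι₁ ι₂ z))) =
      fun z => ((S₁.P.indicator u₁ z.1).toReal * (S₂.P.indicator u₂ z.2).toReal) *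
        Real.log ((S₁.P.indicator u₁ z.1).toReal * (S₂.P.indicator u₂ z.2).toReal) := by
    ext z
    rw [prod_ind h, xlogx, ENNReal.toReal_mul]
  constructor
  · rw [EFin, nu_comp_map h, integrable_map_measure hm.aestronglyMeasurable join_meas.aemeasurable]
    show Integrable (fun z => xlogx (S.P.indicator (prodF u₁ u₂) (joinMap ι₁ ι₂ z))) _
    rw [heq]
    exact a
  · rw [Ent, nu_comp_map h, integral_map join_meas.aemeasurable hm.aestronglyMeasurable, heq]
    exact b

lemma sp_mar (h : IsComp S₁ S₂ S) {u : (ι₁ ⊕ ι₂ → ℝ) → ℝ≥0∞} (hu : u ∈ MExp S 1)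
    (he : EFin S u) : EFin S₁ (mar1 S₂ S u) ∧ EFin S₂ (mar2 S₁ S u) ∧
      Ent S₁ (mar1 S₂ S u) + Ent S₂ (mar2 S₁ S u) ≤ Ent S u := by
  obtain ⟨m1, n1⟩ := mar1_mem h u hu
  obtain ⟨m2, n2⟩ := mar2_mem h u hu
  obtain ⟨i, j⟩ := mexp_real S hu
  have hwm := mexp_meas S hu
  have hm : Measurable (fun x => xlogx (S.P.indicator u x)) := xlogx_meas.comp hwm
  have hr : Measurable (fun x => (S.P.indicator u x).toReal) := hwm.ennreal_toReal
  rw [EFin, nu_comp_map h, integrable_map_measure hm.aestronglyMeasurable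
    join_meas.aemeasurable] at he
  rw [nu_comp_map h, integrable_map_measure hr.aestronglyMeasurable join_meas.aemeasurable] at i
  rw [nu_comp_map h, integral_map join_meas.aemeasurable hr.aestronglyMeasurable] at j
  have q1 : ∀ᵐ x ∂(nuM S₁), 0 < mar1 S₂ S u x ∧ mar1 S₂ S u x < ⊤ ∧
      ∫ y, (S.P.indicator u (joinMap ι₁ ι₂ (x, y))).toReal ∂(nuM S₂) = (mar1 S₂ S u x).toReal := by
    have := mexp_ae S₁ m1
    rw [n1] at this
    filter_upwards [this, nu_ae_mem S₁] with x hx hxP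
    refine ⟨m1.2.1 x hxP, hx, ?_⟩
    have hmx : Measurable (fun y => S.P.indicator u (joinMap ι₁ ι₂ (x, y))) :=
      hwm.comp (join_meas.comp (by fun_prop))
    rw [integral_toReal hmx.aemeasurable (ae_lt_top hmx hx.ne)]
    rfl
  have q2 : ∀ᵐ y ∂(nuM S₂), 0 < mar2 S₁ S u y ∧ mar2 S₁ S u y < ⊤ ∧
      ∫ x, (S.P.indicator u (joinMap ι₁ ι₂ (x, y))).toReal ∂(nuM S₁) = (mar2 S₁ S u y).toReal := by
    have := mexp_ae S₂ m2
    rw [n2] at this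
    filter_upwards [this, nu_ae_mem S₂] with x hx hxP
    refine ⟨m2.2.1 x hxP, hx, ?_⟩
    have hmx : Measurable (fun y => S.P.indicator u (joinMap ι₁ ι₂ (y, x))) :=
      hwm.comp (join_meas.comp (by fun_prop))
    rw [integral_toReal hmx.aemeasurable (ae_lt_top hmx hx.ne)]
    rfl
  obtain ⟨r1, r2, r3⟩ := marg_two (nuM S₁) (nuM S₂)
    (fun z => (S.P.indicator u (joinMap ι₁ ι₂ z)).toReal) (fun _ => ENNReal.toReal_nonneg) i j he
    (by
      filter_upwards [q1] with x hx
      rw [hx.2.2]; exact ENNReal.toReal_pos hx.1.ne' hx.2.1.ne)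
    (by
      filter_upwards [q2] with x hx
      rw [hx.2.2]; exact ENNReal.toReal_pos hx.1.ne' hx.2.1.ne)
  have c1 : (fun x => (∫ y, (S.P.indicator u (joinMap ι₁ ι₂ (x, y))).toReal ∂(nuM S₂)) *
      Real.log (∫ y, (S.P.indicator u (joinMap ι₁ ι₂ (x, y))).toReal ∂(nuM S₂))) =ᵐ[nuM S₁]
      fun x => xlogx (S₁.P.indicator (mar1 S₂ S u) x) := by
    filter_upwards [q1] with x hx
    rw [n1, hx.2.2, xlogx]
  have c2 : (fun y => (∫ x, (S.P.indicator u (joinMap ι₁ ι₂ (x, y))).toReal ∂(nuM S₁)) *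
      Real.log (∫ x, (S.P.indicator u (joinMap ι₁ ι₂ (x, y))).toReal ∂(nuM S₁))) =ᵐ[nuM S₂]
      fun x => xlogx (S₂.P.indicator (mar2 S₁ S u) x) := by
    filter_upwards [q2] with x hx
    rw [n2, hx.2.2, xlogx]
  refine ⟨r1.congr c1, r2.congr c2, ?_⟩
  have d1 := integral_congr_ae c1
  have d2 := integral_congr_ae c2
  rw [Ent, Ent, Ent, ← d1, ← d2, nu_comp_map h,
    integral_map join_meas.aemeasurable hm.aestronglyMeasurable]
  exact r3

end

section

def Gf (S : SystemOn ι) (T : ℝ) (u : (ι → ℝ) → ℝ≥0∞) : ℝ := (Upf S u).toReal + T * Ent S u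

lemma fp_real (S : SystemOn ι) (T : ℝ) {u : (ι → ℝ) → ℝ≥0∞} (hu : u ∈ MExp S 1)
    (hU : Upf S u ≠ ⊤) : Fpf S T u = ((Gf S T u : ℝ) : EReal) := by
  have he : EFin S u := ent_fin S u hu hU.lt_top
  rw [Fpf, sp_fin S hu he, if_neg (EReal.coe_ne_bot _), ← EReal.coe_ennreal_toReal hU, Gf]
  norm_cast
  ring

lemma fp_top (S : SystemOn ι) (T : ℝ) {u : (ι → ℝ) → ℝ≥0∞} (hu : u ∈ MExp S 1)
    (hU : Upf S u = ⊤) : Fpf S T u = ⊤ := by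
  rw [Fpf]
  split_ifs with h
  · rfl
  · have he : EFin S u := by
      by_contra hcon
      exact h (sp_bot S hu hcon)
    rw [sp_fin S hu he, hU, ← EReal.coe_mul, EReal.coe_ennreal_top]
    exact EReal.top_sub_coe _

lemma can_fin (S : SystemOn ι) {T : ℝ} (hT : 0 ≤ T) {u : (ι → ℝ) → ℝ≥0∞}
    (h : IsCanonical S T u) : Upf S u ≠ ⊤ := by
  obtain ⟨hu, h1, h2⟩ := h
  rcases hT.eq_or_lt with h0 | h0
  · exact (((h2 h0.symm).1 _ (one_mem S)).trans_lt (up_one S)).ne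
  · intro hcon
    have := h1 h0 _ (one_mem S)
    rw [fp_top S T hu hcon, fp_real S T (one_mem S) (up_one S).ne, top_le_iff] at this
    exact EReal.coe_ne_top _ this

lemma can_G (S : SystemOn ι) {T : ℝ} (hT : 0 < T) {u : (ι → ℝ) → ℝ≥0∞}
    (h : IsCanonical S T u) {v : (ι → ℝ) → ℝ≥0∞} (hv : v ∈ MExp S 1) (hvU : Upf S v ≠ ⊤) :
    Gf S T u ≤ Gf S T v := by
  have := h.2.1 hT v hv
  rw [fp_real S T h.1 (can_fin S hT.le h), fp_real S T hv hvU] at this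
  exact_mod_cast this

lemma can_unique (S : SystemOn ι) {T : ℝ} (hT : 0 ≤ T) {u w : (ι → ℝ) → ℝ≥0∞}
    (hu : IsCanonical S T u) (hw : IsCanonical S T w) : Set.EqOn u w S.P := by
  have hUu := can_fin S hT hu
  have hUw := can_fin S hT hw
  have eu : EFin S u := ent_fin S u hu.1 hUu.lt_top
  have ew : EFin S w := ent_fin S w hw.1 hUw.lt_top
  obtain ⟨hm, hUm⟩ := mid_mem S hu.1 hw.1
  obtain ⟨em, hfinal⟩ := mid_unique S hu.1 hw.1 eu ew
  have hUm' : Upf S (fun x => (u x + w x) / 2) ≠ ⊤ := by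
    rw [hUm]
    exact ENNReal.div_ne_top (ENNReal.add_ne_top.2 ⟨hUu, hUw⟩) (by simp)
  have hUr : (Upf S (fun x => (u x + w x) / 2)).toReal =
      ((Upf S u).toReal + (Upf S w).toReal) / 2 := by
    rw [hUm, ENNReal.toReal_div, ENNReal.toReal_add hUu hUw]
    simp
  apply hfinal
  rcases hT.eq_or_lt with h0 | h0
  · have hu2 := hu.2.2 h0.symm
    have hw2 := hw.2.2 h0.symm
    have hUeq : Upf S u = Upf S w := le_antisymm (hu2.1 w hw.1) (hw2.1 u hu.1)
    have hUm2 : Upf S (fun x => (u x + w x) / 2) = Upf S u := by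
      rw [← ENNReal.toReal_eq_toReal_iff' hUm' hUu, hUr, ← hUeq]
      ring
    have hmin : ∀ u'' ∈ MExp S 1, Upf S (fun x => (u x + w x) / 2) ≤ Upf S u'' := by
      rw [hUm2]; exact hu2.1
    have a1 := hu2.2 _ hm hmin
    have a2 := hw2.2 _ hm hmin
    rw [sp_fin S hm em, sp_fin S hu.1 eu] at a1
    rw [sp_fin S hm em, sp_fin S hw.1 ew] at a2
    have b1 := EReal.coe_le_coe_iff.1 a1
    have b2 := EReal.coe_le_coe_iff.1 a2
    linarith
  · have a1 := can_G S h0 hu hm hUm'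
    have a2 := can_G S h0 hw hm hUm'
    unfold Gf at a1 a2
    rw [hUr] at a1 a2
    have : T * ((Ent S u + Ent S w) / 2) ≤ T * Ent S (fun x => (u x + w x) / 2) := by linarith
    exact le_of_mul_le_mul_left this h0

variable {ι₁ ι₂ : Type} [Fintype ι₁] [Fintype ι₂]
variable {S₁ : SystemOn ι₁} {S₂ : SystemOn ι₂} {S : SystemOn (ι₁ ⊕ ι₂)}

lemma can_prod (h : IsComp S₁ S₂ S) {T : ℝ} (hT : 0 ≤ T)
    {u₁ : (ι₁ → ℝ) → ℝ≥0∞} {u₂ : (ι₂ → ℝ) → ℝ≥0∞}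
    (h₁ : IsCanonical S₁ T u₁) (h₂ : IsCanonical S₂ T u₂) : IsCanonical S T (prodF u₁ u₂) := by
  have hU1 := can_fin S₁ hT h₁
  have hU2 := can_fin S₂ hT h₂
  have e1 : EFin S₁ u₁ := ent_fin S₁ u₁ h₁.1 hU1.lt_top
  have e2 : EFin S₂ u₂ := ent_fin S₂ u₂ h₂.1 hU2.lt_top
  have hw := prodF_mem h u₁ u₂ h₁.1 h₂.1
  obtain ⟨ew, hE⟩ := sp_prod h h₁.1 h₂.1 e1 e2
  have hU := up_prod h u₁ u₂ h₁.1 h₂.1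
  have hUt : Upf S (prodF u₁ u₂) ≠ ⊤ := by
    rw [hU]; exact ENNReal.add_ne_top.2 ⟨hU1, hU2⟩
  refine ⟨hw, fun h0 u hu => ?_, fun h0 => ⟨fun u hu => ?_, fun u hu hmin => ?_⟩⟩
  · by_cases hUu : Upf S u = ⊤
    · rw [fp_top S T hu hUu]; exact le_top
    · rw [fp_real S T hu hUu, fp_real S T hw hUt, EReal.coe_le_coe_iff]
      obtain ⟨f1, f2, f3⟩ := sp_mar h hu (ent_fin S u hu (lt_top_iff_ne_top.2 hUu))
      have hum := up_mar h u hu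
      have hfin := hUu
      rw [hum] at hfin
      obtain ⟨g1, g2⟩ := ENNReal.add_ne_top.1 hfin
      have k1 := can_G S₁ h0 h₁ (mar1_mem h u hu).1 g1
      have k2 := can_G S₂ h0 h₂ (mar2_mem h u hu).1 g2
      unfold Gf at k1 k2 ⊢
      rw [hum, hU, hE, ENNReal.toReal_add hU1 hU2, ENNReal.toReal_add g1 g2]
      have := mul_le_mul_of_nonneg_left f3 hT
      linarith
  · rw [hU, up_mar h u hu]
    exact add_le_add ((h₁.2.2 h0).1 _ (mar1_mem h u hu).1) ((h₂.2.2 h0).1 _ (mar2_mem h u hu).1)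
  · have m1 := (mar1_mem h u hu).1
    have m2 := (mar2_mem h u hu).1
    have l1 := (h₁.2.2 h0).1 _ m1
    have l2 := (h₂.2.2 h0).1 _ m2
    have hle := hmin _ hw
    have hUu : Upf S u < ⊤ := hle.trans_lt hUt.lt_top
    have hum := up_mar h u hu
    have hfin := hUu.ne
    rw [hum] at hfin
    obtain ⟨g1, g2⟩ := ENNReal.add_ne_top.1 hfin
    rw [hum, hU] at hle
    have hr := (ENNReal.toReal_le_toReal hfin (ENNReal.add_ne_top.2 ⟨hU1, hU2⟩)).2 hle
    rw [ENNReal.toReal_add hU1 hU2, ENNReal.toReal_add g1 g2] at hr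
    have r1 := (ENNReal.toReal_le_toReal hU1 g1).2 l1
    have r2 := (ENNReal.toReal_le_toReal hU2 g2).2 l2
    have q1 : Upf S₁ (mar1 S₂ S u) = Upf S₁ u₁ :=
      (ENNReal.toReal_eq_toReal_iff' g1 hU1).1 (by linarith)
    have q2 : Upf S₂ (mar2 S₁ S u) = Upf S₂ u₂ :=
      (ENNReal.toReal_eq_toReal_iff' g2 hU2).1 (by linarith)
    have s1 := (h₁.2.2 h0).2 _ m1 (by rw [q1]; exact (h₁.2.2 h0).1)
    have s2 := (h₂.2.2 h0).2 _ m2 (by rw [q2]; exact (h₂.2.2 h0).1)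
    have eu : EFin S u := ent_fin S u hu hUu
    obtain ⟨f1, f2, f3⟩ := sp_mar h hu eu
    rw [sp_fin S₁ m1 f1, sp_fin S₁ h₁.1 e1, EReal.coe_le_coe_iff] at s1
    rw [sp_fin S₂ m2 f2, sp_fin S₂ h₂.1 e2, EReal.coe_le_coe_iff] at s2
    rw [sp_fin S hu eu, sp_fin S hw ew, EReal.coe_le_coe_iff, hE]
    linarith

end

/-- The μ-canonical distribution of a composite system
`𝒫₁ × 𝒫₂ = (P₁ × P₂, μ₁ × μ₂, σ₁ ⊞ σ₂)` at temperature `T ≥ 0` is the product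
`u₁ × u₂` of the μ-canonical distributions of the subsystems at the same
temperature. -/
theorem canonical_distribution_of_product
    (ι₁ ι₂ : Type) [Fintype ι₁] [Fintype ι₂]
    (S₁ : SystemOn ι₁) (S₂ : SystemOn ι₂) (S : SystemOn (ι₁ ⊕ ι₂))
    (hP : S.P = {x | (fun i => x (Sum.inl i)) ∈ S₁.P ∧ (fun i => x (Sum.inr i)) ∈ S₂.P})
    (hμ : S.μ = (S₁.μ.prod S₂.μ).map (joinMap ι₁ ι₂))
    (hσ : S.σ = (S₁.σ.prod S₂.μ).map (joinMap ι₁ ι₂)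
        + (S₁.μ.prod S₂.σ).map (joinMap ι₁ ι₂))
    (T : ℝ) (hT : 0 ≤ T) (u₁ : (ι₁ → ℝ) → ℝ≥0∞) (u₂ : (ι₂ → ℝ) → ℝ≥0∞)
    (h₁ : IsCanonical S₁ T u₁) (h₂ : IsCanonical S₂ T u₂) :
    IsCanonical S T
      (fun x => u₁ (fun i => x (Sum.inl i)) * u₂ (fun i => x (Sum.inr i))) ∧
    ∀ u, IsCanonical S T u →
      Set.EqOn u
        (fun x => u₁ (fun i => x (Sum.inl i)) * u₂ (fun i => x (Sum.inr i))) S.P := by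
  have h : IsComp S₁ S₂ S := ⟨hP, hμ, hσ⟩
  have hc : IsCanonical S T (prodF u₁ u₂) := can_prod h hT h₁ h₂
  exact ⟨hc, fun u hu => can_unique S hT hu hc⟩

end
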